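/- Every graph G with no odd hole satisfies χ(G) ≤ 2^(2^(ω(G)+2)). -/

import Mathlib

open SimpleGraph

universe u

variable {V : Type u}

/-- The independence (stability) number of a graph. -/
noncomputable def indepNum (G : SimpleGraph V) : ℕ :=
  sSup {n | ∃ s : Finset V, s.card = n ∧ ∀ x ∈ s, ∀ y ∈ s, x ≠ y → ¬ G.Adj x y}

/-- A walk is induced: any edge of `G` between vertices of the walk is an edge of the walk. -/
def IsInducedWalk (G : SimpleGraph V) {u v : V} (p : G.Walk u v) : Prop :=
  ∀ x ∈ p.support, ∀ y ∈ p.support, G.Adj x y → p.toSubgraph.Adj x y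

/-- An induced path. -/
def IsInducedPath (G : SimpleGraph V) {u v : V} (p : G.Walk u v) : Prop :=
  p.IsPath ∧ IsInducedWalk G p

/-- An odd hole: an induced cycle of odd length at least 5. -/
def HasOddHole (G : SimpleGraph V) : Prop :=
  ∃ (v : V) (p : G.Walk v v), p.IsCycle ∧ IsInducedWalk G p ∧ Odd p.length ∧ 5 ≤ p.length

/-- A cograph: no induced path on four vertices. -/
def IsCograph (G : SimpleGraph V) : Prop :=
  ¬ ∃ a b c d : V, a ≠ c ∧ a ≠ d ∧ b ≠ d ∧
    G.Adj a b ∧ G.Adj b c ∧ G.Adj c d ∧ ¬ G.Adj a c ∧ ¬ G.Adj a d ∧ ¬ G.Adj b d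

/-- A levelling `(L 0, …, L k)` in `G`. -/
def IsLevelling (G : SimpleGraph V) (k : ℕ) (L : ℕ → Set V) : Prop :=
  (∀ i j, i ≤ k → j ≤ k → i ≠ j → Disjoint (L i) (L j)) ∧
  (∃ x, L 0 = {x}) ∧
  (∀ i, 1 ≤ i → i ≤ k → ∀ v ∈ L i,
     (∃ u ∈ L (i - 1), G.Adj u v) ∧ (∀ h, h + 1 < i → ∀ u ∈ L h, ¬ G.Adj u v))

/-- The interior (internal vertices) of a walk is contained in `S`. -/
def InteriorIn (G : SimpleGraph V) {u v : V} (p : G.Walk u v) (S : Set V) : Prop :=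
  ∀ x ∈ p.support, x ≠ u → x ≠ v → x ∈ S

/-- The union `L 0 ∪ ⋯ ∪ L (k-1)`. -/
def lowerLevels (L : ℕ → Set V) (k : ℕ) : Set V := ⋃ i ∈ Finset.range k, L i

/-- There is an odd induced path between `u` and `v` with interior in the lower levels. -/
def OddConn (G : SimpleGraph V) (L : ℕ → Set V) (k : ℕ) (u v : V) : Prop :=
  u ≠ v ∧ ∃ p : G.Walk u v, IsInducedPath G p ∧ Odd p.length ∧
    InteriorIn G p (lowerLevels L k)

/-- `w ∈ L (i+1)` is a dependent of `u ∈ L i`: `u` is its only parent. -/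
def IsDependent (G : SimpleGraph V) (L : ℕ → Set V) (i : ℕ) (u w : V) : Prop :=
  w ∈ L (i + 1) ∧ G.Adj u w ∧ ∀ x ∈ L i, G.Adj x w → x = u

/-! Argue by induction on the clique number. Level a connected graph by the distance from a root.
Distinct levels of the same parity are anticomplete, so it suffices to colour a component `C` of one
level. Let `A` be the set of parents of `C`, and `P` a minimal set of grandparents, so that every
vertex of `P` has a private neighbour in `A`. Two nonadjacent vertices of `P` are joined by an
induced path through private neighbours and `C`, whose interior is anticomplete to that of every
induced path between them through `P` and the levels `Y` behind `P`. Without odd holes the two paths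
have equal parity, so the parity of the latter depends only on its ends, and the odd pairs form a
graph `H` on `P`.

No five vertices of `P` induce the pentagon in `H` up to switching: at a minimal counterexample the
connected set through which the paths run has no cut vertex and consists of the five terminals
alone, where induced paths of length at most three contradict the parities. Four vertices of `P`
that induce a path in `H`, and are all adjacent or all nonadjacent in `H` to a fixed vertex `s`,
would form such a pentagon with `s`. So the neighbours and the nonneighbours of `s` induce cographs,
which are comparability graphs.

Once the odd pairs of a stable set `P` are the comparable pairs of a partial order, the same order
on chosen parents orders the edges of the next level whose ends have no common parent. An antichain
of this order has smaller clique number, since a clique in which any two vertices have a common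
parent has a common parent for all of them. Stable subsets of the next level inherit the parities,
so this works for `A` and then for `C`.
-/

namespace OddHole

/-- The sets `S` and `T` are anticomplete: they are disjoint and no edge joins them. -/
def Anticomplete (G : SimpleGraph V) (S T : Set V) : Prop :=
  ∀ x ∈ S, ∀ y ∈ T, x ≠ y ∧ ¬ G.Adj x y

namespace Anticomplete

variable {G : SimpleGraph V} {S S' T T' : Set V}

theorem symm (h : Anticomplete G S T) : Anticomplete G T S :=
  fun x hx y hy => ⟨(h y hy x hx).1.symm, fun hxy => (h y hy x hx).2 hxy.symm⟩

theorem mono (h : Anticomplete G S T) (hS : S' ⊆ S) (hT : T' ⊆ T) : Anticomplete G S' T' :=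
  fun x hx y hy => h x (hS hx) y (hT hy)

end Anticomplete

/-- `IndPath G x y n S` says that `G` has an induced path from `x` to `y` of length `n` with vertex
set `S`. It is the counterpart of `IsInducedPath` with the length and the vertex set as indices, so
that paths can be taken apart and glued together by induction. -/
inductive IndPath (G : SimpleGraph V) : V → V → ℕ → Set V → Prop
  | nil (x : V) : IndPath G x x 0 {x}
  | cons {a x y : V} {n : ℕ} {S : Set V} : G.Adj a x → IndPath G x y n S → a ∉ S →
      (∀ z ∈ S, G.Adj a z → z = x) → IndPath G a y (n + 1) (insert a S)

namespace IndPath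

variable {G : SimpleGraph V} {a b c d v x y z : V} {n m : ℕ} {S T : Set V}

theorem left_mem (h : IndPath G x y n S) : x ∈ S := by
  cases h <;> simp

theorem right_mem (h : IndPath G x y n S) : y ∈ S := by
  induction h with
  | nil x => rfl
  | cons _ _ _ _ ih => exact Set.mem_insert_of_mem _ ih

theorem edge (h : G.Adj x y) : IndPath G x y 1 {x, y} :=
  cons h (nil y) (by simpa using h.ne) (by simp)

theorem two (hab : G.Adj a b) (hbc : G.Adj b c) (hac : ¬ G.Adj a c) (hne : a ≠ c) :
    IndPath G a c 2 {a, b, c} :=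
  cons hab (edge hbc) (by simp [hab.ne, hne]) (by rintro w (rfl | rfl) hw <;> tauto)

theorem three (hab : G.Adj a b) (hbc : G.Adj b c) (hcd : G.Adj c d) (hac : ¬ G.Adj a c)
    (had : ¬ G.Adj a d) (hbd : ¬ G.Adj b d) : IndPath G a d 3 {a, b, c, d} := by
  have hne : b ≠ d := by rintro rfl; exact had hab
  refine cons hab (two hbc hcd hbd hne) ?_ ?_
  · rintro (rfl | rfl | rfl)
    exacts [hab.ne rfl, had hcd, hbd hab.symm]
  · rintro w (rfl | rfl | rfl) hw <;> tauto

theorem snoc (h : IndPath G x y n S) (hyz : G.Adj y z) (hz : z ∉ S)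
    (hS : ∀ w ∈ S, G.Adj z w → w = y) : IndPath G x z (n + 1) (insert z S) := by
  induction h with
  | nil x =>
    rw [Set.pair_comm]
    exact edge hyz
  | @cons a x y n S hax hp ha hS' ih =>
    have hxz := ih hyz (fun h => hz (Set.mem_insert_of_mem _ h))
      (fun w hw => hS w (Set.mem_insert_of_mem _ hw))
    rw [Set.insert_comm]
    refine cons hax hxz ?_ ?_
    · rintro (rfl | h)
      · exact hz (Set.mem_insert _ _)
      · exact ha h
    · rintro w (rfl | hw) haw
      · exact absurd (hS a (Set.mem_insert _ _) haw.symm ▸ hp.right_mem) ha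
      · exact hS' w hw haw

theorem symm (h : IndPath G x y n S) : IndPath G y x n S := by
  induction h with
  | nil x => exact nil x
  | cons hax _ ha hS ih => exact ih.snoc hax.symm ha hS

theorem append (h : IndPath G x v n S) (h' : IndPath G v y m T) (hST : ∀ w ∈ S, w ∈ T → w = v)
    (hadj : ∀ w ∈ S, w ≠ v → ∀ u ∈ T, u ≠ v → ¬ G.Adj w u) :
    IndPath G x y (n + m) (S ∪ T) := by
  induction h with
  | nil x =>
    rw [Set.union_eq_self_of_subset_left (by simpa using h'.left_mem), Nat.zero_add]
    exact h'
  | @cons a x v n S hax hp ha hS ih =>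
    have hxy := ih h' (fun w hw => hST w (Set.mem_insert_of_mem _ hw))
      (fun w hw => hadj w (Set.mem_insert_of_mem _ hw))
    have hav : a ≠ v := fun h => ha (h ▸ hp.right_mem)
    rw [Set.insert_union, Nat.add_right_comm]
    refine cons hax hxy ?_ ?_
    · rintro (h | h)
      · exact ha h
      · exact hav (hST a (Set.mem_insert _ _) h)
    · rintro w (hw | hw) haw
      · exact hS w hw haw
      · by_cases hwv : w = v
        · exact hS w (hwv ▸ hp.right_mem) haw
        · exact absurd haw (hadj a (Set.mem_insert _ _) hav w hw hwv)

theorem exists_of_mem (h : IndPath G x y n S) (hz : z ∈ S) :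
    ∃ m T, IndPath G z y m T ∧ T ⊆ S := by
  induction h with
  | nil x => obtain rfl : z = x := hz; exact ⟨0, _, nil z, subset_rfl⟩
  | cons hax hp ha hS ih =>
    rcases hz with rfl | hz
    · exact ⟨_, _, cons hax hp ha hS, subset_rfl⟩
    · obtain ⟨m, T, hT, hTS⟩ := ih hz
      exact ⟨m, T, hT, hTS.trans (Set.subset_insert _ _)⟩

theorem exists_extend (h : IndPath G x y n S) (hz : z ∉ S) (hzS : ∃ w ∈ S, G.Adj z w) :
    ∃ m T, IndPath G z y m (insert z T) ∧ T ⊆ S := by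
  induction h with
  | nil x =>
    obtain ⟨w, rfl, hw⟩ := hzS
    exact ⟨1, {w}, edge hw, subset_rfl⟩
  | @cons a x y n S hax hp ha hS ih =>
    by_cases hzS' : ∃ w ∈ S, G.Adj z w
    · obtain ⟨m, T, hT, hTS⟩ := ih (fun h => hz (Set.mem_insert_of_mem _ h)) hzS'
      exact ⟨m, T, hT, hTS.trans (Set.subset_insert _ _)⟩
    · push Not at hzS'
      obtain ⟨w, rfl | hwS, hw⟩ := hzS
      · refine ⟨_, _, cons hw (cons hax hp ha hS) hz ?_, subset_rfl⟩
        rintro u (rfl | hu) hzu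
        · rfl
        · exact absurd hzu (hzS' u hu)
      · exact absurd hw (hzS' w hwS)

theorem length_eq_zero (h : IndPath G x x n S) : n = 0 := by
  cases h with
  | nil => rfl
  | cons _ hp ha _ => exact absurd hp.right_mem ha

theorem length_eq_one (h : IndPath G x y n S) (hxy : G.Adj x y) : n = 1 := by
  cases h with
  | nil => exact absurd rfl hxy.ne
  | cons _ hp _ hS =>
    obtain rfl := hS _ hp.right_mem hxy
    rw [hp.length_eq_zero]

theorem exists_walk (h : IndPath G x y n S) : ∃ p : G.Walk x y, p.IsPath ∧ p.length = n ∧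
    (∀ w, w ∈ p.support ↔ w ∈ S) ∧ ∀ u ∈ S, ∀ w ∈ S, G.Adj u w → s(u, w) ∈ p.edges := by
  induction h with
  | nil x =>
    refine ⟨.nil, by simp, rfl, by simp, ?_⟩
    rintro u rfl w rfl huw
    exact absurd huw G.irrefl
  | cons hax _ ha hS ih =>
    obtain ⟨p, hp, hlen, hsupp, hedge⟩ := ih
    refine ⟨.cons hax p, ?_, by simp [hlen], by simp [hsupp], ?_⟩
    · rw [Walk.cons_isPath_iff, hsupp]; exact ⟨hp, ha⟩
    · rintro u (rfl | hu) w (rfl | hw) huw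
      · exact absurd huw G.irrefl
      · rw [hS w hw huw]; simp
      · rw [hS u hu huw.symm, Sym2.eq_swap]; simp
      · simp [hedge u hu w hw huw]

theorem hasOddHole_of_odd (h : IndPath G a c n S) (hn : Odd n) (hn3 : 3 ≤ n) (hv : v ∉ S)
    (hva : G.Adj v a) (hvc : G.Adj v c) (hS : ∀ w ∈ S, G.Adj v w → w = a ∨ w = c) :
    HasOddHole G := by
  obtain ⟨p, hp, hlen, hsupp, hedge⟩ := h.exists_walk
  have hvp : v ∉ p.support := by rwa [hsupp]
  have hac : a ≠ c := by
    rintro rfl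
    have := h.length_eq_zero
    lia
  refine ⟨v, .cons hva (p.concat hvc.symm), ?_, ?_, ?_, ?_⟩
  · rw [Walk.cons_isCycle_iff]
    refine ⟨hp.concat hvp hvc.symm, ?_⟩
    rw [Walk.edges_concat, List.concat_eq_append, List.mem_append, List.mem_singleton]
    rintro (hmem | heq)
    · exact hvp (Walk.fst_mem_support_of_mem_edges _ hmem)
    · grind [Sym2.eq_iff]
  · intro u hu w hw huw
    have hmem : ∀ w, w ∈ (Walk.cons hva (p.concat hvc.symm)).support ↔ w = v ∨ w ∈ S := by
      intro w
      simp [Walk.support_concat, hsupp, or_comm]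
    have hspoke : ∀ w ∈ S, G.Adj v w → s(v, w) ∈ (Walk.cons hva (p.concat hvc.symm)).edges := by
      intro w hw hvw
      rcases hS w hw hvw with rfl | rfl
      · simp
      · simp [Walk.edges_concat, Sym2.eq_swap]
    rw [Walk.adj_toSubgraph_iff_mem_edges]
    rcases (hmem u).1 hu with rfl | huS <;> rcases (hmem w).1 hw with rfl | hwS
    · exact absurd huw G.irrefl
    · exact hspoke w hwS huw
    · rw [Sym2.eq_swap]; exact hspoke u huS huw.symm
    · simp [Walk.edges_concat, hedge u huS w hwS huw]
  · simp only [Walk.length_cons, Walk.length_concat, hlen]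
    grind
  · simp only [Walk.length_cons, Walk.length_concat, hlen]
    lia

theorem odd_iff_odd (hG : ¬ HasOddHole G) (h : IndPath G x y n S) (h' : IndPath G x y m T)
    (hxy : ¬ G.Adj x y)
    (hST : Anticomplete G (S \ {x, y}) (T \ {x, y})) : Odd n ↔ Odd m := by
  cases h with
  | nil => rw [h'.length_eq_zero]
  | @cons _ a _ n S hxa hp hx hxS =>
    cases h' with
    | nil => exact absurd hp.right_mem hx
    | @cons _ b _ m T hxb hq hx' hxT =>
      have hpos : 0 < n := by
        cases hp with
        | nil => exact absurd hxa hxy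
        | cons => lia
      have hpos' : 0 < m := by
        cases hq with
        | nil => exact absurd hxb hxy
        | cons => lia
      have hST' : Anticomplete G (S \ {y}) (T \ {y}) := by
        refine hST.mono (fun w hw => ⟨.inr hw.1, ?_⟩) (fun w hw => ⟨.inr hw.1, ?_⟩) <;>
          rintro (rfl | rfl)
        exacts [hx hw.1, hw.2 rfl, hx' hw.1, hw.2 rfl]
      have hab : IndPath G a b (n + m) (S ∪ T) := by
        refine hp.append hq.symm (fun w hw hw' => ?_)
          (fun w hw hwy u hu huy => (hST' w ⟨hw, hwy⟩ u ⟨hu, huy⟩).2)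
        by_contra hwy
        exact (hST' w ⟨hw, hwy⟩ w ⟨hw', hwy⟩).1 rfl
      by_contra hodd
      refine hG (hab.hasOddHole_of_odd (v := x) (by grind) (by grind) (by grind) hxa hxb ?_)
      rintro w (hw | hw) hxw
      · exact .inl (hxS w hw hxw)
      · exact .inr (hxT w hw hxw)

end IndPath

/-- `Joined G W x y` says that some induced path of `G` joins `x` and `y` inside `W`, that is, that
`x` and `y` lie in the same connected component of the subgraph induced on `W`. -/
def Joined (G : SimpleGraph V) (W : Set V) (x y : V) : Prop :=
  ∃ n S, IndPath G x y n S ∧ S ⊆ W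

namespace Joined

variable {G : SimpleGraph V} {x y z : V} {W W' : Set V}

theorem left_mem (h : Joined G W x y) : x ∈ W := by
  obtain ⟨n, S, h, hS⟩ := h
  exact hS h.left_mem

theorem refl (hx : x ∈ W) : Joined G W x x :=
  ⟨0, {x}, .nil x, by simpa using hx⟩

theorem symm (h : Joined G W x y) : Joined G W y x := by
  obtain ⟨n, S, h, hS⟩ := h
  exact ⟨n, S, h.symm, hS⟩

theorem right_mem (h : Joined G W x y) : y ∈ W :=
  h.symm.left_mem

theorem mono (h : Joined G W x y) (hW : W ⊆ W') : Joined G W' x y := by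
  obtain ⟨n, S, h, hS⟩ := h
  exact ⟨n, S, h, hS.trans hW⟩

theorem head (h : Joined G W x y) (hz : z ∈ W) (hzx : G.Adj z x) : Joined G W z y := by
  obtain ⟨n, S, h, hS⟩ := h
  by_cases hzS : z ∈ S
  · obtain ⟨m, T, hT, hTS⟩ := h.exists_of_mem hzS
    exact ⟨m, T, hT, hTS.trans hS⟩
  · obtain ⟨m, T, hT, hTS⟩ := h.exists_extend hzS ⟨x, h.left_mem, hzx⟩
    exact ⟨m, _, hT, Set.insert_subset hz (hTS.trans hS)⟩

theorem trans (h : Joined G W x y) (h' : Joined G W y z) : Joined G W x z := by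
  obtain ⟨n, S, h, hS⟩ := h
  induction h with
  | nil => exact h'
  | cons hax _ _ _ ih =>
    exact (ih h' ((Set.subset_insert _ _).trans hS)).head (hS (Set.mem_insert _ _)) hax

theorem exists_adj (h : Joined G W x y) (hne : x ≠ y) : ∃ a ∈ W, G.Adj x a := by
  obtain ⟨n, S, h, hS⟩ := h
  cases h with
  | nil => exact absurd rfl hne
  | cons hax h => exact ⟨_, hS (.inr h.left_mem), hax⟩

theorem component (h : Joined G W x y) : Joined G {z | Joined G W x z} x y := by
  obtain ⟨n, S, h, hS⟩ := h
  refine ⟨n, S, h, fun z hz => ?_⟩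
  obtain ⟨m, T, hT, hTS⟩ := h.symm.exists_of_mem hz
  exact .symm ⟨m, T, hT, hTS.trans hS⟩

end Joined

/-- `PreconnectedOn G W` says that the subgraph of `G` induced on `W` is preconnected. -/
def PreconnectedOn (G : SimpleGraph V) (W : Set V) : Prop :=
  ∀ x ∈ W, ∀ y ∈ W, Joined G W x y

theorem Joined.preconnectedOn (G : SimpleGraph V) (W : Set V) (x : V) :
    PreconnectedOn G {z | Joined G W x z} :=
  fun _ hy _ hz => (component hy).symm.trans (component hz)

/-- The vertex `v` is a cut vertex of the subgraph of `G` induced on `W`, with `K` and `R` the two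
sides that it separates. -/
structure IsSeparation (G : SimpleGraph V) (W : Set V) (v : V) (K R : Set V) : Prop where
  eq_insert : W = insert v (K ∪ R)
  notMem_left : v ∉ K
  notMem_right : v ∉ R
  left_nonempty : K.Nonempty
  right_nonempty : R.Nonempty
  anticomplete : Anticomplete G K R

namespace IsSeparation

variable {G : SimpleGraph V} {W K R S T : Set V} {v x y : V} {n m : ℕ}

theorem symm (h : IsSeparation G W v K R) : IsSeparation G W v R K where
  eq_insert := by rw [Set.union_comm]; exact h.eq_insert
  notMem_left := h.notMem_right
  notMem_right := h.notMem_left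
  left_nonempty := h.right_nonempty
  right_nonempty := h.left_nonempty
  anticomplete := h.anticomplete.symm

theorem subset_left (h : IsSeparation G W v K R) : insert v K ⊆ W := by
  rw [h.eq_insert]
  exact Set.insert_subset_insert Set.subset_union_left

theorem ssubset_left (h : IsSeparation G W v K R) : insert v K ⊂ W := by
  refine ⟨h.subset_left, fun hW => ?_⟩
  obtain ⟨r, hr⟩ := h.right_nonempty
  rcases hW (h.symm.subset_left (.inr hr)) with rfl | hrK
  · exact h.notMem_right hr
  · exact (h.anticomplete r hrK r hr).1 rfl

theorem mem_left_or_right (h : IsSeparation G W v K R) (hx : x ∈ W) :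
    x ∈ insert v K ∨ x ∈ insert v R := by
  rw [h.eq_insert] at hx
  grind

theorem subset_left_of_indPath (h : IsSeparation G W v K R) (hp : IndPath G x v n S) (hS : S ⊆ W)
    (hx : x ∈ insert v K) : S ⊆ insert v K := by
  induction hp with
  | nil x => simp
  | @cons a x v n S hax hp ha _ ih =>
    have haK : a ∈ K := hx.resolve_left fun hav => ha (hav ▸ hp.right_mem)
    refine Set.insert_subset hx (ih h ((Set.subset_insert _ _).trans hS) ?_)
    rcases h.mem_left_or_right (hS (.inr hp.left_mem)) with hxK | rfl | hxR
    · exact hxK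
    · exact Set.mem_insert _ _
    · exact absurd hax (h.anticomplete a haK x hxR).2

theorem preconnectedOn_left (h : IsSeparation G W v K R) (hW : PreconnectedOn G W) :
    PreconnectedOn G (insert v K) := by
  have hv : ∀ x ∈ insert v K, Joined G (insert v K) x v := by
    intro x hx
    obtain ⟨n, S, hp, hS⟩ := hW x (h.subset_left hx) v (h.subset_left (Set.mem_insert _ _))
    exact ⟨n, S, hp, h.subset_left_of_indPath hp hS hx⟩
  exact fun x hx y hy => (hv x hx).trans (hv y hy).symm

theorem exists_indPath_add (h : IsSeparation G W v K R) (hx : x ∈ insert v K)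
    (hp : IndPath G x v n S) (hS : S ⊆ W) (hy : y ∈ insert v R) (hq : IndPath G y v m T)
    (hT : T ⊆ W) : ∃ U ⊆ W, IndPath G x y (n + m) U := by
  have hSK := h.subset_left_of_indPath hp hS hx
  have hTR := h.symm.subset_left_of_indPath hq hT hy
  refine ⟨S ∪ T, Set.union_subset hS hT, hp.append hq.symm (fun w hw hw' => ?_)
    (fun w hw hwv u hu huv => ?_)⟩
  · by_contra hwv
    exact (h.anticomplete w ((hSK hw).resolve_left hwv) w ((hTR hw').resolve_left hwv)).1 rfl
  · exact (h.anticomplete w ((hSK hw).resolve_left hwv) u ((hTR hu).resolve_left huv)).2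

end IsSeparation

theorem exists_isSeparation {G : SimpleGraph V} {W : Set V} {v : V} (hv : v ∈ W)
    (hW : ¬ PreconnectedOn G (W \ {v})) : ∃ K R, IsSeparation G W v K R := by
  simp only [PreconnectedOn, not_forall] at hW
  obtain ⟨x, hx, y, hy, hxy⟩ := hW
  refine ⟨{z | Joined G (W \ {v}) x z}, {z | z ∈ W \ {v} ∧ ¬ Joined G (W \ {v}) x z}, ?_,
    fun h => h.right_mem.2 rfl, fun h => h.1.2 rfl, ⟨x, .refl hx⟩, ⟨y, hy, hxy⟩, ?_⟩
  · ext z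
    have hz : Joined G (W \ {v}) x z → z ∈ W \ {v} := Joined.right_mem
    simp only [Set.mem_insert_iff, Set.mem_union, Set.mem_ofPred_eq, Set.mem_sdiff,
      Set.mem_singleton_iff] at hz ⊢
    grind
  · refine fun a ha b hb => ⟨?_, fun hab => hb.2 (ha.symm.head hb.1 hab.symm).symm⟩
    rintro rfl
    exact hb.2 ha

theorem exists_ne_adj_adj {G : SimpleGraph V} {W : Set V} {x y : V} (hW : PreconnectedOn G W)
    (hcut : ∀ v ∈ W, PreconnectedOn G (W \ {v})) (hx : x ∈ W) (hy : y ∈ W) (hne : x ≠ y)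
    (hxy : ¬ G.Adj x y) : ∃ a ∈ W, ∃ b ∈ W, a ≠ b ∧ G.Adj x a ∧ G.Adj x b := by
  obtain ⟨a, ha, hxa⟩ := (hW x hx y hy).exists_adj hne
  have hya : y ≠ a := by rintro rfl; exact hxy hxa
  obtain ⟨b, hb, hxb⟩ := (hcut a ha x ⟨hx, hxa.ne⟩ y ⟨hy, hya⟩).exists_adj hne
  exact ⟨a, ha, b, hb.1, fun hab => hb.2 hab.symm, hxa, hxb⟩

theorem exists_common_neighbor {G : SimpleGraph V} {W : Set V} {x y : V} (hfin : W.Finite)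
    (hcard : W.ncard ≤ 5) (hW : PreconnectedOn G W)
    (hcut : ∀ v ∈ W, PreconnectedOn G (W \ {v})) (hx : x ∈ W) (hy : y ∈ W) (hne : x ≠ y)
    (hxy : ¬ G.Adj x y) : ∃ m ∈ W, G.Adj x m ∧ G.Adj m y := by
  classical
  obtain ⟨a, ha, b, hb, hab, hxa, hxb⟩ := exists_ne_adj_adj hW hcut hx hy hne hxy
  obtain ⟨c, hc, d, hd, hcd, hyc, hyd⟩ :=
    exists_ne_adj_adj hW hcut hy hx hne.symm fun h => hxy h.symm
  by_contra! hno
  have hsub : (({x, y, a, b, c, d} : Finset V) : Set V) ⊆ W := by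
    intro z hz
    simp only [Finset.coe_insert, Finset.coe_singleton, Set.mem_insert_iff,
      Set.mem_singleton_iff] at hz
    rcases hz with rfl | rfl | rfl | rfl | rfl | rfl <;> assumption
  have hsix : ({x, y, a, b, c, d} : Finset V).card = 6 := by
    have hnot : ∀ m ∈ W, G.Adj x m → ¬ G.Adj y m := fun m hm hxm hym => hno m hm hxm hym.symm
    repeat rw [Finset.card_insert_of_notMem]
    · rfl
    all_goals
      simp only [Finset.mem_insert, Finset.mem_singleton]
      grind [G.irrefl, G.adj_comm]
  have := Set.ncard_le_ncard hsub hfin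
  rw [Set.ncard_coe_finset, hsix] at this
  lia

section Pentagon

/-- The adjacency matrix of the cycle of length five over `ZMod 2`, in which parities of path
lengths are added. -/
def pentagon (i j : Fin 5) : ZMod 2 :=
  if (cycleGraph 5).Adj i j then 1 else 0

theorem pentagon_comm (i j : Fin 5) : pentagon i j = pentagon j i := by
  simp only [pentagon, SimpleGraph.adj_comm]

set_option maxRecDepth 10000 in
theorem exists_pentagon_ne_add : ∀ a b : Fin 5, a ≠ b → ∀ ε : ZMod 2,
    ∃ j, j ≠ a ∧ j ≠ b ∧ pentagon a j ≠ pentagon b j + ε := by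
  decide

set_option maxRecDepth 10000 in
theorem exists_path_switched_pentagon : ∀ δ : Fin 5 → ZMod 2, ∃ a b c d : Fin 5,
    (a ≠ b ∧ b ≠ c ∧ c ≠ d ∧ a ≠ c ∧ a ≠ d ∧ b ≠ d) ∧
      pentagon a b + δ a + δ b = 1 ∧ pentagon b c + δ b + δ c = 1 ∧
      pentagon c d + δ c + δ d = 1 ∧ pentagon a c + δ a + δ c = 0 ∧
      pentagon a d + δ a + δ d = 0 ∧ pentagon b d + δ b + δ d = 0 := by
  decide

theorem exists_others_same_side : ∀ f : Fin 5 → Bool, ∃ a b, a ≠ b ∧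
    ((∀ j, j ≠ a → j ≠ b → f j = true) ∨ (∀ j, j ≠ a → j ≠ b → f j = false)) := by
  decide

/-- Five terminals `t` in a preconnected set `W` such that the induced paths between two terminals
inside `W` all have the same parity, and these parities are the adjacency matrix of the pentagon
switched at the terminals `i` with `δ i = 1`. -/
structure PentagonFrame (G : SimpleGraph V) (W : Set V) (t : Fin 5 → V) (δ : Fin 5 → ZMod 2) :
    Prop where
  preconnectedOn : PreconnectedOn G W
  mem : ∀ i, t i ∈ W
  length_eq : ∀ i j, i ≠ j → ∀ n S, IndPath G (t i) (t j) n S → S ⊆ W →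
    (n : ZMod 2) = pentagon i j + δ i + δ j

namespace PentagonFrame

variable {G : SimpleGraph V} {W W' K R : Set V} {t : Fin 5 → V} {δ : Fin 5 → ZMod 2} {v : V}

theorem mono (h : PentagonFrame G W t δ) (hW : W' ⊆ W) (hW' : PreconnectedOn G W')
    (ht : ∀ i, t i ∈ W') : PentagonFrame G W' t δ :=
  ⟨hW', ht, fun i j hij n S hp hS => h.length_eq i j hij n S hp (hS.trans hW)⟩

theorem injective (h : PentagonFrame G W t δ) : Function.Injective t := by
  intro a b hab
  by_contra hne
  obtain ⟨j, hja, hjb, hj⟩ := exists_pentagon_ne_add a b hne (δ a + δ b)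
  obtain ⟨n, S, hp, hS⟩ := h.preconnectedOn (t a) (h.mem a) (t j) (h.mem j)
  have ha := h.length_eq a j hja.symm n S hp hS
  have hb := h.length_eq b j hjb.symm n S (hab ▸ hp) hS
  grind

theorem length_add (h : PentagonFrame G W t δ) (hs : IsSeparation G W v K R) {i j : Fin 5}
    (hij : i ≠ j) (hi : t i ∈ insert v K) (hj : t j ∈ insert v R) {n m : ℕ} {S T : Set V}
    (hp : IndPath G (t i) v n S) (hS : S ⊆ W) (hq : IndPath G (t j) v m T) (hT : T ⊆ W) :
    (n + m : ZMod 2) = pentagon i j + δ i + δ j := by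
  obtain ⟨U, hU, hpq⟩ := hs.exists_indPath_add hi hp hS hj hq hT
  exact_mod_cast h.length_eq i j hij _ U hpq hU

theorem not_two_right (h : PentagonFrame G W t δ) (hs : IsSeparation G W v K R) {a b : Fin 5}
    (hab : a ≠ b) (ha : t a ∈ insert v R) (hb : t b ∈ insert v R)
    (hK : ∀ j, j ≠ a → j ≠ b → t j ∈ insert v K) : False := by
  have hv := hs.subset_left (Set.mem_insert v K)
  choose n S hp hS using fun i => h.preconnectedOn (t i) (h.mem i) v hv
  obtain ⟨j, hja, hjb, hj⟩ := exists_pentagon_ne_add a b hab (δ a + δ b + n a + n b)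
  have hja' := h.length_add hs hja (hK j hja hjb) ha (hp j) (hS j) (hp a) (hS a)
  have hjb' := h.length_add hs hjb (hK j hja hjb) hb (hp j) (hS j) (hp b) (hS b)
  rw [pentagon_comm] at hja' hjb'
  grind

theorem exists_update (h : PentagonFrame G W t δ) (hs : IsSeparation G W v K R) {o : Fin 5}
    (ho : t o ∈ insert v R) (hK : ∀ j, j ≠ o → t j ∈ insert v K) :
    ∃ δ', PentagonFrame G (insert v K) (Function.update t o v) δ' := by
  have hvK := Set.mem_insert v K
  obtain ⟨m, T, hq, hT⟩ := h.preconnectedOn (t o) (h.mem o) v (hs.subset_left hvK)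
  have hlen : ∀ j, j ≠ o → ∀ n S, IndPath G (t j) v n S → S ⊆ insert v K →
      (n : ZMod 2) = pentagon j o + δ j + (δ o + m) := by
    intro j hj n S hp hS
    have := h.length_add hs hj (hK j hj) ho hp (hS.trans hs.subset_left) hq hT
    grind
  refine ⟨Function.update δ o (δ o + m), hs.preconnectedOn_left h.preconnectedOn, ?_, ?_⟩
  · intro i
    rcases eq_or_ne i o with rfl | hi
    · rwa [Function.update_self]
    · rw [Function.update_of_ne hi]
      exact hK i hi
  · intro i j hij n S hp hS
    rcases eq_or_ne i o with rfl | hi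
    · simp only [Function.update_self, Function.update_of_ne hij.symm] at hp ⊢
      rw [hlen j hij.symm n S hp.symm hS, pentagon_comm]
      ring
    rcases eq_or_ne j o with rfl | hj
    · simp only [Function.update_self, Function.update_of_ne hi] at hp ⊢
      exact hlen i hi n S hp hS
    · simp only [Function.update_of_ne hi, Function.update_of_ne hj] at hp ⊢
      exact h.length_eq i j hij n S hp (hS.trans hs.subset_left)

theorem exists_ssubset_of_isSeparation (h : PentagonFrame G W t δ)
    (hs : IsSeparation G W v K R) {a b : Fin 5} (hab : a ≠ b)
    (hK : ∀ j, j ≠ a → j ≠ b → t j ∈ insert v K) :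
    ∃ W' ⊂ W, ∃ t' δ', PentagonFrame G W' t' δ' := by
  have hone : ∀ o, (∀ j, j ≠ o → t j ∈ insert v K) →
      ∃ W' ⊂ W, ∃ t' δ', PentagonFrame G W' t' δ' := by
    intro o ho
    refine ⟨_, hs.ssubset_left, ?_⟩
    rcases hs.mem_left_or_right (h.mem o) with hoK | hoR
    · refine ⟨t, δ, h.mono hs.subset_left (hs.preconnectedOn_left h.preconnectedOn) fun i => ?_⟩
      rcases eq_or_ne i o with rfl | hi
      exacts [hoK, ho i hi]
    · exact ⟨_, h.exists_update hs hoR ho⟩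
  rcases hs.mem_left_or_right (h.mem a) with haK | haR
  · exact hone b fun j hj => (eq_or_ne j a).elim (fun hja => hja ▸ haK) fun hja => hK j hja hj
  rcases hs.mem_left_or_right (h.mem b) with hbK | hbR
  · exact hone a fun j hj => (eq_or_ne j b).elim (fun hjb => hjb ▸ hbK) fun hjb => hK j hj hjb
  · exact (h.not_two_right hs hab haR hbR hK).elim

theorem exists_ssubset_of_not_preconnectedOn (h : PentagonFrame G W t δ) (hv : v ∈ W)
    (hW : ¬ PreconnectedOn G (W \ {v})) : ∃ W' ⊂ W, ∃ t' δ', PentagonFrame G W' t' δ' := by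
  classical
  obtain ⟨K, R, hs⟩ := exists_isSeparation hv hW
  obtain ⟨a, b, hab, hK | hR⟩ := exists_others_same_side fun i => decide (t i ∈ insert v K)
  · exact h.exists_ssubset_of_isSeparation hs hab fun j hja hjb => of_decide_eq_true (hK j hja hjb)
  · exact h.exists_ssubset_of_isSeparation hs.symm hab fun j hja hjb =>
      (hs.mem_left_or_right (h.mem j)).resolve_left (of_decide_eq_false (hR j hja hjb))

theorem eq_one_iff_adj (h : PentagonFrame G W t δ) (hcut : ∀ v ∈ W, PreconnectedOn G (W \ {v}))
    (hW : W ⊆ Set.range t) {i j : Fin 5} (hij : i ≠ j) :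
    pentagon i j + δ i + δ j = 1 ↔ G.Adj (t i) (t j) := by
  by_cases hadj : G.Adj (t i) (t j)
  · have := h.length_eq i j hij 1 _ (.edge hadj) (by grind [h.mem i, h.mem j])
    simp [← this, hadj]
  · have hcard : W.ncard ≤ 5 := by
      calc W.ncard ≤ (Set.range t).ncard := Set.ncard_le_ncard hW (Set.finite_range t)
        _ ≤ 5 := by simpa [← Set.image_univ] using Set.ncard_image_le (f := t) Set.finite_univ
    obtain ⟨m, hm, him, hmj⟩ := exists_common_neighbor ((Set.finite_range t).subset hW) hcard
      h.preconnectedOn hcut (h.mem i) (h.mem j) (h.injective.ne hij) hadj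
    have := h.length_eq i j hij 2 _ (.two him hmj hadj (h.injective.ne hij))
      (by grind [h.mem i, h.mem j])
    simp only [← this, hadj, iff_false]
    decide

theorem false_of_subset_range (h : PentagonFrame G W t δ)
    (hcut : ∀ v ∈ W, PreconnectedOn G (W \ {v})) (hW : W ⊆ Set.range t) : False := by
  obtain ⟨a, b, c, d, ⟨hne_ab, hne_bc, hne_cd, hne_ac, hne_ad, hne_bd⟩, hab, hbc, hcd, hac, had,
    hbd⟩ := exists_path_switched_pentagon δ
  have hnot : ∀ {i j : Fin 5}, i ≠ j → pentagon i j + δ i + δ j = 0 → ¬ G.Adj (t i) (t j) := by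
    intro i j hij h0 hadj
    rw [← h.eq_one_iff_adj hcut hW hij, h0] at hadj
    exact zero_ne_one hadj
  have hpath := IndPath.three ((h.eq_one_iff_adj hcut hW hne_ab).1 hab)
    ((h.eq_one_iff_adj hcut hW hne_bc).1 hbc) ((h.eq_one_iff_adj hcut hW hne_cd).1 hcd)
    (hnot hne_ac hac) (hnot hne_ad had) (hnot hne_bd hbd)
  have := h.length_eq a d hne_ad 3 _ hpath (by grind [h.mem a, h.mem b, h.mem c, h.mem d])
  rw [had] at this
  exact absurd this (by decide)

end PentagonFrame

theorem not_pentagonFrame [Finite V] (G : SimpleGraph V) (W : Set V) (t : Fin 5 → V)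
    (δ : Fin 5 → ZMod 2) : ¬ PentagonFrame G W t δ := by
  induction W using WellFoundedLT.induction generalizing t δ with
  | _ W ih =>
    intro h
    by_cases hcut : ∀ v ∈ W, PreconnectedOn G (W \ {v})
    · by_cases hW : W ⊆ Set.range t
      · exact h.false_of_subset_range hcut hW
      · obtain ⟨v, hv, hvt⟩ := Set.not_subset.1 hW
        exact ih _ (Set.sdiff_singleton_ssubset.2 hv) t δ
          (h.mono Set.sdiff_subset (hcut v hv) fun i => ⟨h.mem i, fun hi => hvt ⟨i, hi⟩⟩)
    · push Not at hcut
      obtain ⟨v, hv, hW⟩ := hcut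
      obtain ⟨W', hW', t', δ', h'⟩ := h.exists_ssubset_of_not_preconnectedOn hv hW
      exact ih W' hW' t' δ' h'

end Pentagon

section Cograph

variable {H : SimpleGraph V} {Q Q' X Y : Set V} {v : V}

theorem isCograph_induce_iff : IsCograph (H.induce Q) ↔ ∀ a ∈ Q, ∀ b ∈ Q, ∀ c ∈ Q, ∀ d ∈ Q,
    H.Adj a b → H.Adj b c → H.Adj c d → H.Adj a c ∨ H.Adj a d ∨ H.Adj b d := by
  constructor
  · intro h a ha b hb c hc d hd hab hbc hcd
    by_contra! hno
    refine h ⟨⟨a, ha⟩, ⟨b, hb⟩, ⟨c, hc⟩, ⟨d, hd⟩, ?_, ?_, ?_, hab, hbc, hcd, hno⟩ <;>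
      rw [Ne, Subtype.mk.injEq] <;> rintro rfl
    exacts [hno.2.1 hcd, hno.2.2 hab.symm, hno.2.1 hab]
  · rintro h ⟨a, b, c, d, -, -, -, hab, hbc, hcd, hac, had, hbd⟩
    rcases h a a.2 b b.2 c c.2 d d.2 hab hbc hcd with h | h | h
    exacts [hac h, had h, hbd h]

theorem isCograph_induce_mono (h : IsCograph (H.induce Q)) (hQ : Q' ⊆ Q) :
    IsCograph (H.induce Q') := by
  rw [isCograph_induce_iff] at h ⊢
  exact fun a ha b hb c hc d hd => h a (hQ ha) b (hQ hb) c (hQ hc) d (hQ hd)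

theorem isCograph_induce_compl (h : IsCograph (H.induce Q)) : IsCograph (Hᶜ.induce Q) := by
  rw [isCograph_induce_iff] at h ⊢
  intro a ha b hb c hc d hd hab hbc hcd
  by_contra! hno
  have had : a ≠ d := by rintro rfl; exact hno.1 hcd.symm
  have hac : a ≠ c := by rintro rfl; exact hno.2.1 hcd
  have hbd : b ≠ d := by rintro rfl; exact hno.2.1 hab
  simp only [compl_adj, not_and_not_right] at hab hbc hcd hno
  -- The complement of the path `a b c d` is the path `b d a c`.
  rcases h b hb d hd a ha c hc (hno.2.2 hbd) (hno.2.1 had).symm (hno.1 hac) with h | h | h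
  exacts [hab.2 h.symm, hbc.2 h, hcd.2 h.symm]

/-- `Splits H Q` says that the subgraph of `H` induced on `Q` or its complement is disconnected,
as witnessed by a partition of `Q` into two nonempty parts. -/
def Splits (H : SimpleGraph V) (Q : Set V) : Prop :=
  ∃ X Y : Set V, X.Nonempty ∧ Y.Nonempty ∧ X ∪ Y = Q ∧ (Anticomplete H X Y ∨ Anticomplete Hᶜ X Y)

theorem splits_of_splits_compl (h : Splits Hᶜ Q) : Splits H Q := by
  obtain ⟨X, Y, hX, hY, hXY, hc⟩ := h
  rw [compl_compl] at hc
  exact ⟨X, Y, hX, hY, hXY, hc.symm⟩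

theorem splits_insert_of_mixed (h : IsCograph (H.induce (insert v (X ∪ Y))))
    (hanti : Anticomplete H X Y) {u w : V} (hu : u ∈ Y) (hvu : H.Adj v u) (hw : w ∈ X)
    (hwv : w ≠ v) (hvw : ¬ H.Adj v w) : Splits H (insert v (X ∪ Y)) := by
  rw [isCograph_induce_iff] at h
  refine ⟨{x ∈ X | x ≠ v ∧ ¬ H.Adj v x}, insert v (Y ∪ {x ∈ X | H.Adj v x}), ⟨w, hw, hwv, hvw⟩,
    ⟨v, Set.mem_insert _ _⟩, ?_, .inl ?_⟩
  · ext x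
    simp only [Set.mem_union, Set.mem_insert_iff, Set.mem_ofPred_eq]
    tauto
  · rintro x ⟨hx, hxv, hvx⟩ y (rfl | hy | ⟨hy, hvy⟩)
    · exact ⟨hxv, fun hxy => hvx hxy.symm⟩
    · exact hanti x hx y hy
    · refine ⟨by rintro rfl; exact hvx hvy, fun hxy => ?_⟩
      rcases h u (by simp [hu]) v (by simp) y (by simp [hy]) x (by simp [hx]) hvu.symm hvy hxy.symm
        with h | h | h
      exacts [(hanti y hy u hu).2 h.symm, (hanti x hx u hu).2 h.symm, hvx h]

theorem splits_insert_of_no_adj (hX : X.Nonempty) (hv : v ∉ X) (hanti : Anticomplete H X Y)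
    (hvX : ∀ x ∈ X, ¬ H.Adj v x) : Splits H (insert v (X ∪ Y)) := by
  refine ⟨X, insert v Y, hX, ⟨v, Set.mem_insert _ _⟩, Set.union_insert, .inl ?_⟩
  rintro x hx y (rfl | hy)
  · exact ⟨ne_of_mem_of_not_mem hx hv, fun h => hvX x hx h.symm⟩
  · exact hanti x hx y hy

theorem splits_insert (h : IsCograph (H.induce (insert v (X ∪ Y)))) (hX : X.Nonempty)
    (hY : Y.Nonempty) (hv : v ∉ X ∪ Y) (hanti : Anticomplete H X Y) :
    Splits H (insert v (X ∪ Y)) := by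
  have hvX : v ∉ X := fun h => hv (.inl h)
  have hvY : v ∉ Y := fun h => hv (.inr h)
  by_cases hadjX : ∀ x ∈ X, ¬ H.Adj v x
  · exact splits_insert_of_no_adj hX hvX hanti hadjX
  by_cases hadjY : ∀ y ∈ Y, ¬ H.Adj v y
  · rw [Set.union_comm]
    exact splits_insert_of_no_adj hY hvY hanti.symm hadjY
  push Not at hadjX hadjY
  obtain ⟨a, ha, hva⟩ := hadjX
  obtain ⟨b, hb, hvb⟩ := hadjY
  by_cases hall : ∀ z ∈ X ∪ Y, H.Adj v z
  · refine ⟨{v}, X ∪ Y, ⟨v, rfl⟩, hX.inl, by simp, .inr ?_⟩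
    rintro _ rfl z hz
    simp [hall z hz, (hall z hz).ne]
  · push Not at hall
    obtain ⟨w, hw | hw, hvw⟩ := hall
    · exact splits_insert_of_mixed h hanti hb hvb hw (ne_of_mem_of_not_mem hw hvX) hvw
    · rw [Set.union_comm] at h ⊢
      exact splits_insert_of_mixed h hanti.symm ha hva hw (ne_of_mem_of_not_mem hw hvY) hvw

theorem splits_pair {w : V} (hvw : v ≠ w) : Splits H {v, w} := by
  refine ⟨{v}, {w}, ⟨v, rfl⟩, ⟨w, rfl⟩, rfl, ?_⟩
  simp only [Anticomplete, Set.mem_singleton_iff, forall_eq, compl_adj]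
  tauto

theorem splits_of_isCograph (hfin : Q.Finite) (h : IsCograph (H.induce Q)) (hQ : Q.Nontrivial) :
    Splits H Q := by
  induction Q, hfin using Set.Finite.induction_on with
  | empty => simp at hQ
  | @insert v Q hv _ ih =>
    rcases Q.subsingleton_or_nontrivial with hQ' | hQ'
    · rcases hQ'.eq_empty_or_singleton with rfl | ⟨w, rfl⟩
      · simp at hQ
      · exact splits_pair (by simpa using hv)
    · have hcograph := isCograph_induce_mono h (Set.subset_insert v Q)
      obtain ⟨X, Y, hX, hY, rfl, hXY | hXY⟩ := ih hcograph hQ'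
      · exact splits_insert h hX hY hv hXY
      · exact splits_of_splits_compl (splits_insert (isCograph_induce_compl h) hX hY hv hXY)

/-- `IsComparabilityOn H Q lt` says that `lt` is a strict partial order whose comparable pairs in
`Q` are exactly the edges of `H` inside `Q`. -/
structure IsComparabilityOn (H : SimpleGraph V) (Q : Set V) (lt : V → V → Prop) : Prop where
  isStrictOrder : IsStrictOrder V lt
  adj_iff : ∀ x ∈ Q, ∀ y ∈ Q, H.Adj x y ↔ lt x y ∨ lt y x

theorem isStrictOrder_of_parts {l₁ l₂ : V → V → Prop} (h₁ : IsStrictOrder V l₁)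
    (h₂ : IsStrictOrder V l₂) (hXY : Disjoint X Y) (p : Prop) :
    IsStrictOrder V fun x y =>
      (x ∈ X ∧ y ∈ X ∧ l₁ x y) ∨ (x ∈ Y ∧ y ∈ Y ∧ l₂ x y) ∨ (p ∧ x ∈ X ∧ y ∈ Y) where
  irrefl x := by
    have := h₁.irrefl x
    have := h₂.irrefl x
    have hx : x ∈ X → x ∉ Y := fun h => Set.disjoint_left.1 hXY h
    tauto
  trans x y z := by
    have := h₁.trans x y z
    have := h₂.trans x y z
    have hy : y ∈ X → y ∉ Y := fun h => Set.disjoint_left.1 hXY h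
    tauto

theorem isComparabilityOn_of_parts {l₁ l₂ : V → V → Prop} (h₁ : IsComparabilityOn H X l₁)
    (h₂ : IsComparabilityOn H Y l₂) (hXY : Anticomplete H X Y ∨ Anticomplete Hᶜ X Y) :
    ∃ lt, IsComparabilityOn H (X ∪ Y) lt := by
  have hdisj : Disjoint X Y := Set.disjoint_left.2 fun x hx hx' => by
    rcases hXY with h | h <;> exact (h x hx x hx').1 rfl
  obtain ⟨p, hcross⟩ : ∃ p : Prop, ∀ x ∈ X, ∀ y ∈ Y, H.Adj x y ↔ p := by
    rcases hXY with h | h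
    · exact ⟨False, fun x hx y hy => by simp [(h x hx y hy).2]⟩
    · exact ⟨True, fun x hx y hy => by simpa [(h x hx y hy).1] using (h x hx y hy).2⟩
  refine ⟨_, isStrictOrder_of_parts h₁.isStrictOrder h₂.isStrictOrder hdisj p,
    fun x hx y hy => ?_⟩
  have hY : ∀ z ∈ X, z ∉ Y := fun _ h => Set.disjoint_left.1 hdisj h
  have hX : ∀ z ∈ Y, z ∉ X := fun _ h => Set.disjoint_right.1 hdisj h
  rcases hx with hx | hx <;> rcases hy with hy | hy
  · simp [hx, hy, hY, h₁.adj_iff x hx y hy]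
  · simp [hx, hy, hX, hY, hcross x hx y hy]
  · simp [hx, hy, hX, hY, H.adj_comm x, hcross y hy x hx]
  · simp [hx, hy, hX, h₂.adj_iff x hx y hy]

theorem exists_isComparabilityOn [Finite V] (Q : Set V) (h : IsCograph (H.induce Q)) :
    ∃ lt, IsComparabilityOn H Q lt := by
  induction Q using WellFoundedLT.induction with
  | ind Q ih =>
    rcases Q.subsingleton_or_nontrivial with hQ | hQ
    · refine ⟨fun _ _ => False, { irrefl := by simp, trans := by simp }, fun x hx y hy => ?_⟩
      simp [hQ hx hy]
    · obtain ⟨X, Y, ⟨x, hx⟩, ⟨y, hy⟩, rfl, hXY⟩ := splits_of_isCograph Q.toFinite h hQ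
      have hdisj : ∀ z ∈ X, z ∉ Y := fun z hz hz' => by
        rcases hXY with h | h <;> exact (h z hz z hz').1 rfl
      have hXlt : X ⊂ X ∪ Y :=
        ⟨Set.subset_union_left, fun hsub => hdisj y (hsub (.inr hy)) hy⟩
      have hYlt : Y ⊂ X ∪ Y :=
        ⟨Set.subset_union_right, fun hsub => hdisj x hx (hsub (.inl hx))⟩
      obtain ⟨l₁, h₁⟩ := ih X hXlt (isCograph_induce_mono h hXlt.subset)
      obtain ⟨l₂, h₂⟩ := ih Y hYlt (isCograph_induce_mono h hYlt.subset)
      exact isComparabilityOn_of_parts h₁ h₂ hXY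

end Cograph

section Colouring

variable {G : SimpleGraph V} {Z Z' : Set V} {n m : ℕ}

theorem colorable_induce_mono (h : (G.induce Z).Colorable n) (hZ : Z' ⊆ Z) :
    (G.induce Z').Colorable n :=
  h.of_hom (G.induceHomOfLE hZ).toHom

theorem colorable_induce_of_subset_iUnion (F : Fin m → Set V) (hF : Z ⊆ ⋃ i, F i)
    (h : ∀ i, (G.induce (F i)).Colorable n) : (G.induce Z).Colorable (m * n) := by
  have hmem (x : Z) : ∃ i, (x : V) ∈ F i := by simpa using hF x.2
  choose i hi using hmem
  let c (j) : (G.induce (F j)).Coloring (Fin n) := (h j).some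
  have hc {x y : Z} (hxy : G.Adj x y) (j) (hx : ↑x ∈ F j) (k) (hy : ↑y ∈ F k) (hjk : j = k) :
      c j ⟨x, hx⟩ ≠ c k ⟨y, hy⟩ := by
    subst hjk
    exact (c j).valid hxy
  let C : (G.induce Z).Coloring (Fin m × Fin n) :=
    Coloring.mk (fun x => (i x, c (i x) ⟨x, hi x⟩)) fun {x y} hxy heq =>
      hc hxy _ (hi x) _ (hi y) (Prod.mk.inj heq).1 (Prod.mk.inj heq).2
  simpa using C.colorable

theorem exists_iUnion_isIndepSet (h : (G.induce Z).Colorable n) :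
    ∃ F : Fin n → Set V, ⋃ i, F i = Z ∧ ∀ i, G.IsIndepSet (F i) := by
  obtain ⟨c⟩ := h
  refine ⟨fun i => {x | ∃ hx : x ∈ Z, c ⟨x, hx⟩ = i}, by ext; simp, ?_⟩
  rintro i x ⟨hx, rfl⟩ y ⟨hy, hxy⟩ - hadj
  exact c.valid (v := ⟨x, hx⟩) (w := ⟨y, hy⟩) hadj hxy.symm

theorem height_lt_of_cliqueFree {α : Type*} [Preorder α] {H : SimpleGraph α}
    (hadj : ∀ x y, x < y → H.Adj x y) (hH : H.CliqueFree (m + 1)) (x : α) :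
    Order.height x < m := by
  by_contra! hm
  obtain ⟨p, -, rfl⟩ := Order.exists_series_of_le_height x hm
  refine hH (Finset.univ.map ⟨p, p.strictMono.injective⟩) ⟨?_, by simp⟩
  simp only [Finset.coe_map, Finset.coe_univ, Set.image_univ]
  rintro _ ⟨i, rfl⟩ _ ⟨j, rfl⟩ hij
  rcases (ne_of_apply_ne p hij).lt_or_gt with hij | hij
  · exact hadj _ _ (p.strictMono hij)
  · exact (hadj _ _ (p.strictMono hij)).symm

theorem exists_iUnion_isAntichain {r : V → V → Prop}
    (htrans : ∀ x ∈ Z, ∀ y ∈ Z, ∀ z ∈ Z, r x y → r y z → r x z)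
    (hr : ∀ x ∈ Z, ∀ y ∈ Z, r x y → G.Adj x y) (hZ : G.CliqueFreeOn Z (m + 1)) :
    ∃ F : Fin m → Set V, ⋃ i, F i = Z ∧ ∀ i, IsAntichain r (F i) := by
  have : IsStrictOrder Z fun x y => r x y :=
    { irrefl := fun x hx => (hr x x.2 x x.2 hx).ne rfl
      trans := fun x y z => htrans x x.2 y y.2 z z.2 }
  let := partialOrderOfSO fun x y : Z => r x y
  have hlt (x : Z) : Order.height x < m :=
    height_lt_of_cliqueFree (H := G.induce Z) (fun x y hxy => hr x x.2 y y.2 hxy)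
      ((cliqueFree_induce_iff G Z _).2 hZ) x
  have hcol (x : Z) : ∃ k : Fin m, Order.height x = k := by
    obtain ⟨k, hk⟩ := ENat.ne_top_iff_exists.1 (hlt x).ne_top
    exact ⟨⟨k, by simpa [← hk] using hlt x⟩, hk.symm⟩
  refine ⟨fun i => {x | ∃ hx : x ∈ Z, Order.height (⟨x, hx⟩ : Z) = i}, ?_, ?_⟩
  · ext x
    simp only [Set.mem_iUnion]
    exact ⟨fun ⟨_, hx, _⟩ => hx, fun hx => (hcol ⟨x, hx⟩).imp fun _ hk => ⟨hx, hk⟩⟩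
  · rintro i x ⟨hx, hxi⟩ y ⟨hy, hyi⟩ - hxy
    have hxy' : (⟨x, hx⟩ : Z) < ⟨y, hy⟩ := hxy
    exact (Order.height_strictMono hxy' (hlt _).lt_top).ne (hxi.trans hyi.symm)

end Colouring

section Parity

variable {G : SimpleGraph V} {A A' B B' Y : Set V} {R : V → V → Prop} {a c p x y z : V}

theorem not_adj_of_isIndepSet (hA : G.IsIndepSet A) (ha : a ∈ A) (hc : c ∈ A) : ¬ G.Adj a c :=
  fun h => hA ha hc h.ne h

theorem exists_even_indPath (hpx : G.Adj p x) (hpy : G.Adj p y) (hxy : ¬ G.Adj x y) :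
    ∃ n S, IndPath G x y n S ∧ S ⊆ {x, y} ∪ {p} ∧ ¬ Odd n := by
  by_cases hne : x = y
  · subst hne
    exact ⟨0, {x}, .nil x, by simp, by decide⟩
  · refine ⟨2, {x, p, y}, .two hpx.symm hpy hxy hne, ?_, by decide⟩
    rw [Set.pair_comm p y, Set.insert_union, Set.singleton_union]

/-- `ParityIn G A B R` says that an induced path between two vertices `a`, `c` of `A` whose interior
lies in `B` has odd length exactly when `R a c` holds. -/
def ParityIn (G : SimpleGraph V) (A B : Set V) (R : V → V → Prop) : Prop :=
  ∀ a ∈ A, ∀ c ∈ A, ∀ n S, IndPath G a c n S → S ⊆ {a, c} ∪ B → (Odd n ↔ R a c)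

namespace ParityIn

theorem mono (h : ParityIn G A B R) (hA : A' ⊆ A) (hB : B' ⊆ B) : ParityIn G A' B' R :=
  fun a ha c hc n S hS hSB =>
    h a (hA ha) c (hA hc) n S hS (hSB.trans (Set.union_subset_union_right _ hB))

theorem not_of_common_neighbor (h : ParityIn G A B R) (hA : G.IsIndepSet A) (ha : a ∈ A)
    (hc : c ∈ A) (hx : x ∈ B) (hax : G.Adj a x) (hcx : G.Adj c x) : ¬ R a c := by
  obtain ⟨n, S, hS, hSx, hn⟩ :=
    exists_even_indPath hax.symm hcx.symm (not_adj_of_isIndepSet hA ha hc)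
  rwa [← h a ha c hc n S hS (hSx.trans (Set.union_subset_union_right _ (by simpa using hx)))]

theorem of_path_three (h : ParityIn G A B R) (hA : G.IsIndepSet A) (ha : a ∈ A) (hc : c ∈ A)
    (hx : x ∈ B) (hy : y ∈ B) (hax : G.Adj a x) (hxy : G.Adj x y) (hcy : G.Adj c y)
    (hay : ¬ G.Adj a y) (hcx : ¬ G.Adj c x) : R a c := by
  have hP := IndPath.three hax hxy hcy.symm hay (not_adj_of_isIndepSet hA ha hc)
    fun h => hcx h.symm
  rw [← h a ha c hc 3 _ hP (by rintro u (rfl | rfl | rfl | rfl) <;> simp [hx, hy])]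
  decide

theorem not_of_path_four (h : ParityIn G A B R) (hA : G.IsIndepSet A) (ha : a ∈ A) (hc : c ∈ A)
    (hx : x ∈ B) (hy : y ∈ B) (hz : z ∈ B) (hax : G.Adj a x) (hxy : G.Adj x y) (hyz : G.Adj y z)
    (hcz : G.Adj c z) (hay : ¬ G.Adj a y) (haz : ¬ G.Adj a z) (hxz : ¬ G.Adj x z)
    (hcx : ¬ G.Adj c x) (hcy : ¬ G.Adj c y) : ¬ R a c := by
  have hac := not_adj_of_isIndepSet hA ha hc
  have hxc : IndPath G x c 3 {x, y, z, c} :=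
    .three hxy hyz hcz.symm hxz (fun h => hcx h.symm) fun h => hcy h.symm
  have hP : IndPath G a c 4 {a, x, y, z, c} := by
    refine .cons hax hxc ?_ ?_
    · rintro (rfl | rfl | rfl | rfl)
      exacts [hax.ne rfl, haz hyz, hay hyz.symm, haz hcz]
    · rintro u (rfl | rfl | rfl | rfl) hu
      exacts [rfl, absurd hu hay, absurd hu haz, absurd hu hac]
  rw [← h a ha c hc 4 _ hP (by rintro u (rfl | rfl | rfl | rfl | rfl) <;> simp [hx, hy, hz])]
  decide

theorem transfer (h : ParityIn G A Y R) (hG : ¬ HasOddHole G) (hA : G.IsIndepSet A)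
    (hY : ∀ a ∈ A, ∀ c ∈ A, Joined G ({a, c} ∪ Y) a c) (hBY : Anticomplete G B Y) :
    ParityIn G A B R := by
  intro a ha c hc n S hS hSB
  obtain ⟨m, T, hT, hTY⟩ := hY a ha c hc
  rw [← h a ha c hc m T hT hTY]
  exact hS.odd_iff_odd hG hT (not_adj_of_isIndepSet hA ha hc)
    (hBY.mono (Set.sdiff_subset_iff.2 hSB) (Set.sdiff_subset_iff.2 hTY))

theorem exists_iUnion_isIndepSet {lt : V → V → Prop} {m : ℕ}
    (h : ParityIn G A B fun a c => lt a c ∨ lt c a) (hlt : IsStrictOrder V lt) (hAB : A ⊆ B)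
    (hA : G.CliqueFreeOn A (m + 1)) :
    ∃ F : Fin m → Set V, ⋃ i, F i = A ∧ ∀ i, G.IsIndepSet (F i) := by
  have htrans : ∀ x ∈ A, ∀ y ∈ A, ∀ z ∈ A, G.Adj x y ∧ lt x y → G.Adj y z ∧ lt y z →
      G.Adj x z ∧ lt x z := by
    rintro x hx y hy z hz ⟨hxy, hltxy⟩ ⟨hyz, hltyz⟩
    have hltxz := hlt.trans _ _ _ hltxy hltyz
    refine ⟨by_contra fun hxz => ?_, hltxz⟩
    obtain ⟨n, S, hS, hSy, hn⟩ := exists_even_indPath hxy.symm hyz hxz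
    refine hn ((h x hx z hz n S hS (hSy.trans ?_)).2 (.inl hltxz))
    exact Set.union_subset_union_right _ (Set.singleton_subset_iff.2 (hAB hy))
  obtain ⟨F, hF, hanti⟩ := exists_iUnion_isAntichain htrans (fun _ _ _ _ hxy => hxy.1) hA
  have hFA (i) : F i ⊆ A := hF ▸ Set.subset_iUnion F i
  refine ⟨F, hF, fun i p hp q hq hne hpq => ?_⟩
  rcases (h p (hFA i hp) q (hFA i hq) 1 _ (.edge hpq) Set.subset_union_left).1 odd_one
    with hlt | hlt
  exacts [hanti i hp hq hne ⟨hpq, hlt⟩, hanti i hq hp hne.symm ⟨hpq.symm, hlt⟩]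

end ParityIn

end Parity

/-- The stable set `A` covers `B`, in the sense that each vertex of `B` has a parent in `A`, and two
vertices of `A` are joined by odd induced paths through `B` exactly when they are comparable in the
strict partial order `lt`. -/
structure OrderedCover (G : SimpleGraph V) (A B : Set V) (lt : V → V → Prop) : Prop where
  isStrictOrder : IsStrictOrder V lt
  isIndepSet : G.IsIndepSet A
  exists_adj : ∀ x ∈ B, ∃ a ∈ A, G.Adj a x
  parityIn : ParityIn G A B fun a c => lt a c ∨ lt c a

namespace OrderedCover

variable {G : SimpleGraph V} {A B F : Set V} {lt : V → V → Prop} {r : V → V} {w n : ℕ}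
  {a c x y z : V}

theorem adj_of_adj (h : OrderedCover G A B lt) (ha : a ∈ A) (hc : c ∈ A) (hx : x ∈ B) (hy : y ∈ B)
    (hz : z ∈ B) (hax : G.Adj a x) (hcx : G.Adj c x) (hay : G.Adj a y) (hyz : G.Adj y z)
    (hcz : G.Adj c z) (haz : ¬ G.Adj a z) : G.Adj c y := by
  by_contra hcy
  exact h.parityIn.not_of_common_neighbor h.isIndepSet ha hc hx hax hcx
    (h.parityIn.of_path_three h.isIndepSet ha hc hy hz hay hyz hcz haz hcy)

theorem exists_adj_of_isClique (h : OrderedCover G A B lt) {t : Finset V} (ht : t.Nonempty)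
    (htB : ↑t ⊆ B) (hclique : G.IsClique t)
    (hshare : ∀ x ∈ t, ∀ y ∈ t, ∃ a ∈ A, G.Adj a x ∧ G.Adj a y) : ∃ a ∈ A, ∀ x ∈ t, G.Adj a x := by
  induction ht using Finset.Nonempty.cons_induction with
  | singleton x =>
    obtain ⟨a, ha, hax, -⟩ := hshare x (by simp) x (by simp)
    exact ⟨a, ha, by simpa using hax⟩
  | cons z t hz ht ih =>
    simp only [Finset.coe_cons, Set.insert_subset_iff, isClique_insert] at htB hclique
    simp only [Finset.mem_cons, forall_eq_or_imp] at hshare ⊢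
    obtain ⟨a, ha, hat⟩ := ih htB.2 hclique.1 fun x hx => (hshare.2 x hx).2
    by_cases haz : G.Adj a z
    · exact ⟨a, ha, haz, hat⟩
    obtain ⟨x, hx⟩ := ht
    obtain ⟨c, hc, hcx, hcz⟩ := (hshare.2 x hx).1
    refine ⟨c, hc, hcz, fun y hy => ?_⟩
    have hyz : G.Adj y z := (hclique.2 y hy (ne_of_mem_of_not_mem hy hz).symm).symm
    exact h.adj_of_adj ha hc (htB.2 hx) (htB.2 hy) htB.1 (hat x hx) hcx (hat y hy) hyz hcz haz

/-- The relation `ParentLT G A lt r` orders the edges between vertices without a common parent by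
the order `lt` of the chosen parents `r x`. -/
def ParentLT (G : SimpleGraph V) (A : Set V) (lt : V → V → Prop) (r : V → V) (x y : V) : Prop :=
  (G.Adj x y ∧ ∀ a ∈ A, G.Adj a x → ¬ G.Adj a y) ∧ lt (r x) (r y)

theorem lt_or_lt (h : OrderedCover G A B lt) (ha : a ∈ A) (hc : c ∈ A) (hx : x ∈ B) (hy : y ∈ B)
    (hxy : G.Adj x y) (hno : ∀ a ∈ A, G.Adj a x → ¬ G.Adj a y) (hax : G.Adj a x)
    (hcy : G.Adj c y) : lt a c ∨ lt c a :=
  h.parityIn.of_path_three h.isIndepSet ha hc hx hy hax hxy hcy (hno a ha hax)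
    fun hcx => hno c hc hcx hcy

theorem parentLT_or_parentLT (h : OrderedCover G A B lt) (hr : ∀ x ∈ B, r x ∈ A ∧ G.Adj (r x) x)
    (hx : x ∈ B) (hy : y ∈ B) (hxy : G.Adj x y) (hno : ∀ a ∈ A, G.Adj a x → ¬ G.Adj a y) :
    ParentLT G A lt r x y ∨ ParentLT G A lt r y x := by
  have hno' : ∀ a ∈ A, G.Adj a y → ¬ G.Adj a x := fun a ha hay hax => hno a ha hax hay
  exact (h.lt_or_lt (hr x hx).1 (hr y hy).1 hx hy hxy hno (hr x hx).2 (hr y hy).2).imp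
    (fun hlt => ⟨⟨hxy, hno⟩, hlt⟩) fun hlt => ⟨⟨hxy.symm, hno'⟩, hlt⟩

theorem parentLT_trans (h : OrderedCover G A B lt) (hr : ∀ x ∈ B, r x ∈ A ∧ G.Adj (r x) x)
    (hx : x ∈ B) (hy : y ∈ B) (hz : z ∈ B) (hxy : ParentLT G A lt r x y)
    (hyz : ParentLT G A lt r y z) : ParentLT G A lt r x z := by
  obtain ⟨⟨hxy, hnoxy⟩, hltxy⟩ := hxy
  obtain ⟨⟨hyz, hnoyz⟩, hltyz⟩ := hyz
  obtain ⟨hxA, hrx⟩ := hr x hx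
  obtain ⟨hyA, hry⟩ := hr y hy
  obtain ⟨hzA, hrz⟩ := hr z hz
  have htrans := h.isStrictOrder.trans
  have hlt : lt (r x) (r z) := htrans _ _ _ hltxy hltyz
  have siblings {a c u : V} (ha : a ∈ A) (hc : c ∈ A) (hu : u ∈ B) (hau : G.Adj a u)
      (hcu : G.Adj c u) : ¬ (lt a c ∨ lt c a) :=
    h.parityIn.not_of_common_neighbor h.isIndepSet ha hc hu hau hcu
  have hxz : G.Adj x z := by
    by_contra hxz
    refine h.parityIn.not_of_path_four h.isIndepSet hxA hzA hx hy hz hrx hxy hyz hrz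
      (hnoxy _ hxA hrx) (fun hxz => ?_) hxz (fun hzx => ?_)
      (fun hzy => hnoyz _ hzA hzy hrz) (.inl hlt)
    · exact siblings hxA hzA hz hxz hrz (.inl hlt)
    · exact siblings hxA hzA hx hrx hzx (.inl hlt)
  refine ⟨⟨hxz, fun t ht htx htz => ?_⟩, hlt⟩
  rcases h.lt_or_lt ht hyA hx hy hxy hnoxy htx hry with hty | hyt
  · exact siblings ht hzA hz htz hrz (.inl (htrans _ _ _ hty hltyz))
  · exact siblings ht hxA hx htx hrx (.inr (htrans _ _ _ hltxy hyt))

theorem cliqueFreeOn_of_isAntichain (h : OrderedCover G A B lt)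
    (hr : ∀ x ∈ B, r x ∈ A ∧ G.Adj (r x) x) (hF : F ⊆ B)
    (hanti : IsAntichain (ParentLT G A lt r) F) (hw : G.CliqueFreeOn (A ∪ B) (n + 2)) :
    G.CliqueFreeOn F (n + 1) := by
  classical
  intro t htF ht
  have htB : ↑t ⊆ B := htF.trans hF
  have hne : t.Nonempty := Finset.card_pos.1 (by simp [ht.card_eq])
  obtain ⟨a, ha, hat⟩ := h.exists_adj_of_isClique hne htB ht.isClique fun x hx y hy => by
    rcases eq_or_ne x y with rfl | hxy
    · exact ⟨r x, (hr x (htB hx)).1, (hr x (htB hx)).2, (hr x (htB hx)).2⟩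
    by_contra! hno
    rcases h.parentLT_or_parentLT hr (htB hx) (htB hy) (ht.isClique hx hy hxy) hno with hlt | hlt
    · exact hanti (htF hx) (htF hy) hxy hlt
    · exact hanti (htF hy) (htF hx) hxy.symm hlt
  refine hw (t := insert a t) ?_ (ht.insert hat)
  rw [Finset.coe_insert, Set.insert_subset_iff]
  exact ⟨.inl ha, htB.trans Set.subset_union_right⟩

theorem colorable (h : OrderedCover G A B lt) (hw : G.CliqueFreeOn (A ∪ B) (w + 2))
    (hn : ∀ Z, G.CliqueFreeOn Z (w + 1) → (G.induce Z).Colorable n) :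
    (G.induce B).Colorable ((w + 1) * n) := by
  have hr := h.exists_adj
  choose! r hr using hr
  obtain ⟨F, hF, hanti⟩ := exists_iUnion_isAntichain (r := ParentLT G A lt r) (m := w + 1)
    (fun x hx y hy z hz => h.parentLT_trans hr hx hy hz) (fun _ _ _ _ hxy => hxy.1.1)
    (CliqueFreeOn.subset _ Set.subset_union_right hw)
  refine colorable_induce_of_subset_iUnion F hF.ge fun i => hn _ ?_
  exact h.cliqueFreeOn_of_isAntichain hr (hF ▸ Set.subset_iUnion F i) (hanti i) hw

end OrderedCover

section SecondNeighbors

variable {G : SimpleGraph V} {P A C F Y : Set V} {R lt : V → V → Prop} {r : V → V} {w n k : ℕ}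
  {p q y z : V} {T : Set V}

/-- `neighborsIn G A C` is the set of vertices of `C` that have a neighbour in `A`. -/
def neighborsIn (G : SimpleGraph V) (A C : Set V) : Set V :=
  {x ∈ C | ∃ a ∈ A, G.Adj a x}

theorem neighborsIn_subset : neighborsIn G A C ⊆ C :=
  Set.sep_subset _ _

theorem IndPath.extend_both (h : IndPath G p q k T) (hTY : T ⊆ {p, q} ∪ Y)
    (hyzY : Anticomplete G {y, z} Y) (hpy : G.Adj p y) (hqz : G.Adj q z) (hyz : ¬ G.Adj y z)
    (hqy : ¬ G.Adj q y) (hpz : ¬ G.Adj p z) :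
    IndPath G y z (k + 2) (insert z (insert y T)) := by
  have hyT : y ∉ T := fun hy => by
    rcases hTY hy with (rfl | rfl) | hy
    exacts [hpy.ne rfl, hyz hqz, (hyzY y (by simp) y hy).1 rfl]
  have hzT : z ∉ T := fun hz => by
    rcases hTY hz with (rfl | rfl) | hz
    exacts [hyz hpy.symm, hqz.ne rfl, (hyzY z (by simp) z hz).1 rfl]
  have hyq : IndPath G y q (k + 1) (insert y T) := by
    refine .cons hpy.symm h hyT fun u hu hyu => ?_
    rcases hTY hu with (rfl | rfl) | hu
    exacts [rfl, absurd hyu.symm hqy, absurd hyu (hyzY y (by simp) u hu).2]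
  refine hyq.snoc hqz ?_ ?_
  · rintro (rfl | hz)
    exacts [hpz hpy, hzT hz]
  · rintro u (rfl | hu) hzu
    · exact absurd hzu.symm hyz
    rcases hTY hu with (rfl | rfl) | hu
    exacts [absurd hzu.symm hpz, rfl, absurd hzu (hyzY z (by simp) u hu).2]

theorem exists_indPath_of_parents (hP : G.IsIndepSet P) (hparY : ParityIn G P Y R)
    (hparA : ParityIn G P (neighborsIn G P A) R) (hpq : Joined G ({p, q} ∪ Y) p q)
    (hAY : Anticomplete G A Y) (hp : p ∈ P) (hq : q ∈ P) (hy : y ∈ A) (hz : z ∈ A)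
    (hpy : G.Adj p y) (hqz : G.Adj q z) (hyz : ¬ G.Adj y z) :
    ∃ k T, IndPath G y z k T ∧ T ⊆ {y, z} ∪ (P ∪ Y) ∧ (Odd k ↔ R p q) := by
  have heven {u v} (hu : u ∈ P) (huy : G.Adj u y) (huz : G.Adj u z) (hv : v ∈ A)
      (hpv : G.Adj p v) (hqv : G.Adj q v) :
      ∃ k T, IndPath G y z k T ∧ T ⊆ {y, z} ∪ (P ∪ Y) ∧ (Odd k ↔ R p q) := by
    obtain ⟨k, T, hT, hTu, hk⟩ := exists_even_indPath huy huz hyz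
    refine ⟨k, T, hT, hTu.trans (Set.union_subset_union_right _ (by simp [hu])), iff_of_false hk ?_⟩
    exact hparA.not_of_common_neighbor hP hp hq ⟨hv, p, hp, hpv⟩ hpv hqv
  by_cases hqy : G.Adj q y
  · exact heven hq hqy hqz hy hpy hqy
  by_cases hpz : G.Adj p z
  · exact heven hp hpy hpz hz hpz hqz
  obtain ⟨k, T, hT, hTY⟩ := hpq
  have hyzY : Anticomplete G {y, z} Y := hAY.mono (by simp [Set.insert_subset_iff, hy, hz]) le_rfl
  refine ⟨_, _, hT.extend_both hTY hyzY hpy hqz hyz hqy hpz, ?_, ?_⟩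
  · rintro u (rfl | rfl | hu)
    · simp
    · simp
    · rcases hTY hu with (rfl | rfl) | hu
      exacts [.inr (.inl hp), .inr (.inl hq), .inr (.inr hu)]
  · rw [← hparY p hp q hq k T hT hTY]
    simp [Nat.odd_add]

theorem ParityIn.descend (hparY : ParityIn G P Y R) (hG : ¬ HasOddHole G) (hP : G.IsIndepSet P)
    (hY : ∀ p ∈ P, ∀ q ∈ P, Joined G ({p, q} ∪ Y) p q) (hAY : Anticomplete G A Y)
    (hC : Anticomplete G C (P ∪ Y)) (hF : G.IsIndepSet F) (hFA : F ⊆ A)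
    (hr : ∀ y ∈ F, r y ∈ P ∧ G.Adj (r y) y) : ParityIn G F C fun y z => R (r y) (r z) := by
  have hparA : ParityIn G P (neighborsIn G P A) R :=
    hparY.transfer hG hP hY (hAY.mono neighborsIn_subset le_rfl)
  intro y hy z hz n S hS hSC
  obtain ⟨hpP, hpy⟩ := hr y hy
  obtain ⟨hqP, hqz⟩ := hr z hz
  have hyz := not_adj_of_isIndepSet hF hy hz
  obtain ⟨k, T, hT, hTP, hk⟩ := exists_indPath_of_parents hP hparY hparA
    (hY _ hpP _ hqP) hAY hpP hqP (hFA hy) (hFA hz) hpy hqz hyz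
  exact (hS.odd_iff_odd hG hT hyz
    (hC.mono (Set.sdiff_subset_iff.2 hSC) (Set.sdiff_subset_iff.2 hTP))).trans hk

theorem colorable_second_neighborsIn (hG : ¬ HasOddHole G) (hlt : IsStrictOrder V lt)
    (hP : G.IsIndepSet P) (hpar : ParityIn G P Y fun p q => lt p q ∨ lt q p)
    (hY : ∀ p ∈ P, ∀ q ∈ P, Joined G ({p, q} ∪ Y) p q) (hAY : Anticomplete G A Y)
    (hC : Anticomplete G C (P ∪ Y)) (hw : G.CliqueFreeOn (P ∪ A ∪ C) (w + 2))
    (hn : ∀ Z, G.CliqueFreeOn Z (w + 1) → (G.induce Z).Colorable n) :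
    (G.induce (neighborsIn G (neighborsIn G P A) C)).Colorable
      (((w + 1) * n) * ((w + 1) * n)) := by
  have hPcover : OrderedCover G P (neighborsIn G P A) lt :=
    ⟨hlt, hP, fun a ha => ha.2, hpar.transfer hG hP hY (hAY.mono neighborsIn_subset le_rfl)⟩
  have hPA : P ∪ neighborsIn G P A ⊆ P ∪ A ∪ C :=
    (Set.union_subset_union_right _ neighborsIn_subset).trans Set.subset_union_left
  obtain ⟨F, hF, hFi⟩ := exists_iUnion_isIndepSet
    (hPcover.colorable (CliqueFreeOn.subset _ hPA hw) hn)
  have hFsub (i) : F i ⊆ neighborsIn G P A := hF ▸ Set.subset_iUnion F i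
  have hr : ∀ a ∈ neighborsIn G P A, ∃ p ∈ P, G.Adj p a := fun a ha => ha.2
  choose! r hr using hr
  refine colorable_induce_of_subset_iUnion (fun i => neighborsIn G (F i) C) ?_ fun i => ?_
  · rintro x ⟨hx, a, ha, hax⟩
    obtain ⟨i, hi⟩ := Set.mem_iUnion.1 (hF.ge ha)
    exact Set.mem_iUnion.2 ⟨i, hx, a, hi, hax⟩
  · have hFA : F i ⊆ A := (hFsub i).trans neighborsIn_subset
    have hparF := hpar.descend hG hP hY hAY hC (hFi i) hFA fun y hy => hr y (hFsub i hy)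
    have hcover : OrderedCover G (F i) (neighborsIn G (F i) C) fun y z => lt (r y) (r z) :=
      ⟨{ irrefl := fun x => hlt.irrefl (r x), trans := fun x y z => hlt.trans (r x) (r y) (r z) },
        hFi i, fun x hx => hx.2, hparF.mono le_rfl neighborsIn_subset⟩
    refine hcover.colorable (CliqueFreeOn.subset _ (Set.union_subset_union ?_ ?_) hw) hn
    exacts [hFA.trans Set.subset_union_right, neighborsIn_subset]

end SecondNeighbors

section ParityGraph

variable {G H : SimpleGraph V} {K Q W : Set V} {s : V}

/-- The graph in which `x` and `y` are adjacent when `G` has an induced path of odd length from `x`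
to `y` inside `W`. -/
def parityGraph (G : SimpleGraph V) (W : Set V) : SimpleGraph V where
  Adj x y := ∃ n S, IndPath G x y n S ∧ S ⊆ W ∧ Odd n
  symm := ⟨fun _ _ ⟨n, S, hS, h⟩ => ⟨n, S, hS.symm, h⟩⟩
  loopless := ⟨fun _ ⟨n, S, hS, _, hn⟩ => by simp [hS.length_eq_zero] at hn⟩

open Classical in
theorem natCast_zmod_two_eq_ite (n : ℕ) : (n : ZMod 2) = if Odd n then 1 else 0 := by
  split_ifs with hn
  · exact ZMod.natCast_eq_one_iff_odd.2 hn
  · exact ZMod.natCast_eq_zero_iff_even.2 (Nat.not_odd_iff_even.1 hn)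

theorem switched_pentagon_eq_path : ∀ (σ : ZMod 2) (i j : Fin 5), i ≠ j →
    ![![0, σ, σ, σ, σ], ![σ, 0, 0, 1, 0], ![σ, 0, 0, 1, 1], ![σ, 1, 1, 0, 0],
      ![σ, 0, 1, 0, 0]] i j =
      pentagon i j + ![σ, 1, 0, 0, 1] i + ![σ, 1, 0, 0, 1] j := by
  decide

open Classical in
theorem isCograph_induce_of_parityIn [Finite V] (hW : PreconnectedOn G W) (hQW : Q ⊆ W)
    (hpar : ParityIn G Q W H.Adj) (hs : s ∈ Q) (hKQ : K ⊆ Q) {σ : Prop}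
    (hK : ∀ x ∈ K, H.Adj s x ↔ σ) : IsCograph (H.induce K) := by
  rw [isCograph_induce_iff]
  intro a ha b hb c hc d hd hab hbc hcd
  by_contra! hno
  -- Up to switching, the vertex `s` and the path `a b c d` form the pentagon `s a c b d`.
  let t : Fin 5 → V := ![s, a, c, b, d]
  let δ : Fin 5 → ZMod 2 := ![if σ then 1 else 0, 1, 0, 0, 1]
  have ht (i) : t i ∈ Q := by
    fin_cases i
    exacts [hs, hKQ ha, hKQ hc, hKQ hb, hKQ hd]
  have hδ (i j) (hij : i ≠ j) :
      (if H.Adj (t i) (t j) then 1 else 0 : ZMod 2) = pentagon i j + δ i + δ j := by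
    rw [← switched_pentagon_eq_path _ i j hij]
    by_cases hσ : σ <;> simp only [hσ, iff_true, iff_false] at hK <;>
      fin_cases i <;> fin_cases j <;> first
      | exact absurd rfl hij
      | simp [t, hσ, hab, hbc, hcd, hno, hK a ha, hK b hb, hK c hc, hK d hd, H.adj_comm _ s,
          H.adj_comm b a, H.adj_comm c a, H.adj_comm d a, H.adj_comm c b, H.adj_comm d b,
          H.adj_comm d c]
  refine not_pentagonFrame G W t δ ⟨hW, fun i => hQW (ht i), fun i j hij n S hS hSW => ?_⟩
  rw [natCast_zmod_two_eq_ite, ← hδ i j hij]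
  simp only [hpar _ (ht i) _ (ht j) n S hS (hSW.trans Set.subset_union_right)]

end ParityGraph

section Layer

variable {G H : SimpleGraph V} {Y P Q A C K : Set V} {s : V} {w n : ℕ}

/-- Three consecutive layers `P`, `A`, `C` of a levelling of a graph, where `C` is connected and
`Y` lies behind `P` and links its vertices to each other: every vertex of `C` has a parent in `A`,
every vertex of `A` has a parent in `P` and a child in `C`. -/
structure LayerSystem (G : SimpleGraph V) (Y P A C : Set V) : Prop where
  anticomplete_mid : Anticomplete G A Y
  anticomplete_last : Anticomplete G C (P ∪ Y)
  preconnectedOn : PreconnectedOn G C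
  joined : ∀ x ∈ P ∪ Y, ∀ y ∈ P ∪ Y, Joined G ({x, y} ∪ Y) x y
  exists_parent : ∀ c ∈ C, ∃ a ∈ A, G.Adj a c
  exists_child : ∀ a ∈ A, ∃ c ∈ C, G.Adj a c
  exists_grandparent : ∀ a ∈ A, ∃ p ∈ P, G.Adj p a

/-- Every vertex of `Q` has a neighbour in `A` that no other vertex of `Q` is adjacent to. -/
def HasPrivateNeighbors (G : SimpleGraph V) (Q A : Set V) : Prop :=
  ∀ q ∈ Q, ∃ a ∈ A, G.Adj q a ∧ ∀ p ∈ Q, G.Adj p a → p = q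

namespace LayerSystem

theorem restrict (h : LayerSystem G Y P A C) (hQ : Q ⊆ P)
    (hQA : ∀ a ∈ A, ∃ q ∈ Q, G.Adj q a) : LayerSystem G Y Q A C where
  __ := h
  anticomplete_last := h.anticomplete_last.mono le_rfl (Set.union_subset_union_left _ hQ)
  joined x hx y hy :=
    h.joined x (Set.union_subset_union_left _ hQ hx) y (Set.union_subset_union_left _ hQ hy)
  exists_grandparent := hQA

theorem exists_hasPrivateNeighbors [Finite V] (h : LayerSystem G Y P A C) :
    ∃ Q ⊆ P, LayerSystem G Y Q A C ∧ HasPrivateNeighbors G Q A := by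
  obtain ⟨Q, hQP, hQ⟩ := exists_minimal_le_of_wellFoundedLT (fun Q => LayerSystem G Y Q A C) P h
  refine ⟨Q, hQP, hQ.prop, fun q hq => ?_⟩
  by_contra! hno
  have hdel : LayerSystem G Y (Q \ {q}) A C := by
    refine hQ.prop.restrict Set.sdiff_subset fun a ha => ?_
    obtain ⟨p, hp, hpa⟩ := hQ.prop.exists_grandparent a ha
    by_cases hpq : p = q
    · obtain ⟨p', hp', hpa', hne⟩ := hno a ha (hpq ▸ hpa)
      exact ⟨p', ⟨hp', hne⟩, hpa'⟩
    · exact ⟨p, ⟨hp, hpq⟩, hpa⟩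
  exact (hQ.le_of_le hdel Set.sdiff_subset hq).2 rfl

theorem preconnectedOn_union (h : LayerSystem G Y P A C) : PreconnectedOn G (P ∪ Y) :=
  fun x hx y hy => (h.joined x hx y hy).mono
    (Set.union_subset (by simp [Set.insert_subset_iff, hx, hy]) Set.subset_union_right)

theorem exists_indPath_of_private (h : LayerSystem G Y P A C) (hpriv : HasPrivateNeighbors G P A)
    {x y : V} (hx : x ∈ P) (hy : y ∈ P) :
    ∃ m T, IndPath G x y m T ∧ Anticomplete G (T \ {x, y}) ((P ∪ Y) \ {x, y}) := by
  obtain ⟨a, ha, hxa, hpa⟩ := hpriv x hx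
  obtain ⟨b, hb, hyb, hpb⟩ := hpriv y hy
  obtain ⟨c, hc, hac⟩ := h.exists_child a ha
  obtain ⟨d, hd, hbd⟩ := h.exists_child b hb
  have hpath : Joined G ({x, y} ∪ ({a, b} ∪ C)) x y := by
    have hcd := (h.preconnectedOn c hc d hd).mono
      (show C ⊆ {x, y} ∪ ({a, b} ∪ C) from fun u hu => .inr (.inr hu))
    have hay := (((hcd.head (by simp) hac).symm.head (by simp) hbd).head (by simp) hyb).symm
    exact hay.head (by simp) hxa
  obtain ⟨m, T, hT, hTsub⟩ := hpath
  refine ⟨m, T, hT, fun u hu v hv => ?_⟩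
  have hnot : ∀ e ∈ A, e ∉ P ∪ Y := fun e he heP => by
    obtain ⟨f, hf, hef⟩ := h.exists_child e he
    exact (h.anticomplete_last f hf e heP).2 hef.symm
  have hparent : ∀ e ∈ A, ∀ z ∈ ({x, y} : Set V), (∀ p ∈ P, G.Adj p e → p = z) →
      e ≠ v ∧ ¬ G.Adj e v := by
    intro e he z hz hze
    refine ⟨fun hev => hnot e he (hev ▸ hv.1), fun hev => ?_⟩
    rcases hv.1 with hvP | hvY
    · exact hv.2 (hze v hvP hev.symm ▸ hz)
    · exact (h.anticomplete_mid e he v hvY).2 hev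
  rcases hTsub hu.1 with hu' | (rfl | rfl) | huC
  · exact absurd hu' hu.2
  · exact hparent _ ha x (by simp) hpa
  · exact hparent _ hb y (by simp) hpb
  · exact h.anticomplete_last u huC v hv.1

theorem parityIn_parityGraph (h : LayerSystem G Y P A C) (hpriv : HasPrivateNeighbors G P A)
    (hG : ¬ HasOddHole G) : ParityIn G P (P ∪ Y) (parityGraph G (P ∪ Y)).Adj := by
  intro x hx y hy n S hS hSW
  have hxyW : {x, y} ∪ (P ∪ Y) = P ∪ Y :=
    Set.union_eq_self_of_subset_left (by simp [Set.insert_subset_iff, hx, hy])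
  rw [hxyW] at hSW
  refine ⟨fun hn => ⟨n, S, hS, hSW, hn⟩, fun ⟨k, S', hS', hSW', hk⟩ => ?_⟩
  by_cases hxy : G.Adj x y
  · rwa [hS.length_eq_one hxy, ← hS'.length_eq_one hxy]
  obtain ⟨m, T, hT, hTW⟩ := h.exists_indPath_of_private hpriv hx hy
  have hsame {k S} (hS : IndPath G x y k S) (hSW : S ⊆ P ∪ Y) : Odd k ↔ Odd m :=
    hS.odd_iff_odd hG hT hxy (hTW.symm.mono (Set.sdiff_subset_sdiff_left hSW) le_rfl)
  rwa [hsame hS hSW, ← hsame hS' hSW']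

theorem colorable_of_isCograph [Finite V] (h : LayerSystem G Y P A C) (hG : ¬ HasOddHole G)
    (hpar : ParityIn G P (P ∪ Y) H.Adj) (hK : K ⊆ P) (hcog : IsCograph (H.induce K))
    (hw : G.CliqueFreeOn (P ∪ A ∪ C) (w + 2))
    (hn : ∀ Z, G.CliqueFreeOn Z (w + 1) → (G.induce Z).Colorable n) :
    (G.induce (neighborsIn G (neighborsIn G K A) C)).Colorable
      ((w + 1) * (((w + 1) * n) * ((w + 1) * n))) := by
  obtain ⟨lt, hlt, hcomp⟩ := exists_isComparabilityOn K hcog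
  have hparK : ParityIn G K (P ∪ Y) fun p q => lt p q ∨ lt q p :=
    fun p hp q hq n S hS hSW => (hpar p (hK hp) q (hK hq) n S hS hSW).trans (hcomp p hp q hq)
  have hKw : G.CliqueFreeOn K (w + 1 + 1) :=
    CliqueFreeOn.subset _ (hK.trans (Set.subset_union_left.trans Set.subset_union_left)) hw
  obtain ⟨F, hF, hFi⟩ :=
    hparK.exists_iUnion_isIndepSet hlt (hK.trans Set.subset_union_left) hKw
  have hFK (i) : F i ⊆ K := hF ▸ Set.subset_iUnion F i
  refine colorable_induce_of_subset_iUnion (fun i => neighborsIn G (neighborsIn G (F i) A) C) ?_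
    fun i => ?_
  · rintro x ⟨hx, a, ⟨ha, p, hp, hpa⟩, hax⟩
    obtain ⟨i, hi⟩ := Set.mem_iUnion.1 (hF.ge hp)
    exact Set.mem_iUnion.2 ⟨i, hx, a, ⟨ha, p, hi, hpa⟩, hax⟩
  · have hFP := (hFK i).trans hK
    exact colorable_second_neighborsIn hG hlt (hFi i)
      (hparK.mono (hFK i) Set.subset_union_right)
      (fun p hp q hq => h.joined p (.inl (hFP hp)) q (.inl (hFP hq))) h.anticomplete_mid
      (h.anticomplete_last.mono le_rfl (Set.union_subset_union_left _ hFP))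
      (CliqueFreeOn.subset _ (by gcongr) hw) hn

theorem colorable [Finite V] (h : LayerSystem G Y P A C) (hG : ¬ HasOddHole G)
    (hw : G.CliqueFreeOn (P ∪ A ∪ C) (w + 2))
    (hn : ∀ Z, G.CliqueFreeOn Z (w + 1) → (G.induce Z).Colorable n) :
    (G.induce C).Colorable (2 * ((w + 1) * (((w + 1) * n) * ((w + 1) * n)))) := by
  obtain ⟨Q, hQP, hQ, hpriv⟩ := h.exists_hasPrivateNeighbors
  rcases Q.eq_empty_or_nonempty with rfl | ⟨s, hs⟩
  · have : IsEmpty C := ⟨fun ⟨c, hc⟩ => by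
      obtain ⟨a, ha, -⟩ := hQ.exists_parent c hc
      obtain ⟨q, hq, -⟩ := hQ.exists_grandparent a ha
      exact hq⟩
    exact .of_isEmpty _
  have hpar := hQ.parityIn_parityGraph hpriv hG
  set H := parityGraph G (Q ∪ Y)
  let σ : Fin 2 → Prop := ![True, False]
  let K (i : Fin 2) : Set V := {x ∈ Q | H.Adj s x ↔ σ i}
  refine colorable_induce_of_subset_iUnion (fun i => neighborsIn G (neighborsIn G (K i) A) C) ?_
    fun i => ?_
  · intro c hc
    obtain ⟨a, ha, hac⟩ := hQ.exists_parent c hc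
    obtain ⟨q, hq, hqa⟩ := hQ.exists_grandparent a ha
    have hqK : ∃ i, q ∈ K i := by
      by_cases hsq : H.Adj s q
      exacts [⟨0, hq, by simp [σ, hsq]⟩, ⟨1, hq, by simp [σ, hsq]⟩]
    obtain ⟨i, hi⟩ := hqK
    exact Set.mem_iUnion.2 ⟨i, hc, a, ⟨ha, q, hi, hqa⟩, hac⟩
  · have hKQ : K i ⊆ Q := Set.sep_subset _ _
    have hcog := isCograph_induce_of_parityIn hQ.preconnectedOn_union Set.subset_union_left hpar hs
      hKQ fun x hx => hx.2
    exact hQ.colorable_of_isCograph hG hpar hKQ hcog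
      (CliqueFreeOn.subset _ (by gcongr) hw) hn

end LayerSystem

end Layer

section Levels

variable {G : SimpleGraph V} {Z C S T : Set V} {d : V → ℕ} {r x y : V} {j k w n : ℕ}

theorem Joined.reachable (h : Joined G Z x y) :
    (G.induce Z).Reachable ⟨x, h.left_mem⟩ ⟨y, h.right_mem⟩ := by
  obtain ⟨m, S, hS, hSZ⟩ := h
  induction hS with
  | nil => rfl
  | cons hax hS _ _ ih =>
    have hSZ' := (Set.subset_insert _ _).trans hSZ
    exact (Adj.reachable (v := ⟨_, hSZ' hS.left_mem⟩) (by exact hax)).trans (ih hSZ')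

theorem Joined.of_reachable {x y : Z} (h : (G.induce Z).Reachable x y) : Joined G Z x y := by
  obtain ⟨p⟩ := h
  induction p with
  | nil => exact .refl (Subtype.coe_prop _)
  | cons hxy _ ih => exact ih.head (Subtype.coe_prop _) hxy

theorem colorable_induce_of_joined
    (h : ∀ x ∈ Z, (G.induce {y | Joined G Z x y}).Colorable n) : (G.induce Z).Colorable n := by
  refine colorable_iff_forall_connectedComponent.2 fun K => ?_
  induction K using ConnectedComponent.ind with
  | h x =>
    exact (h x x.2).of_hom
      ⟨fun y => ⟨y, .of_reachable (ConnectedComponent.exact y.2).symm⟩, fun hxy => hxy⟩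

theorem colorable_induce_of_levels (hd : ∀ x ∈ Z, ∀ y ∈ Z, G.Adj x y → d x ≤ d y + 1)
    (h : ∀ k, (G.induce {x ∈ Z | d x = k}).Colorable n) : (G.induce Z).Colorable (2 * n) := by
  refine colorable_induce_of_subset_iUnion (fun i : Fin 2 => {x ∈ Z | d x % 2 = i})
    (fun x hx => Set.mem_iUnion.2 ⟨⟨d x % 2, Nat.mod_lt _ two_pos⟩, hx, rfl⟩) fun i => ?_
  refine colorable_induce_of_joined fun x hx => colorable_induce_mono (h (d x)) ?_
  rintro y ⟨m, S, hS, hSZ⟩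
  induction hS with
  | nil => exact ⟨hx.1, rfl⟩
  | @cons a x y m S hax hS _ _ ih =>
    have hSZ' := (Set.subset_insert _ _).trans hSZ
    obtain ⟨hxZ, hxi⟩ := hSZ' hS.left_mem
    obtain ⟨hyZ, hyd⟩ := ih ⟨hxZ, hxi⟩ hSZ'
    have hle := hd a hx.1 x hxZ hax
    have hge := hd x hxZ a hx.1 hax.symm
    have hai := hx.2
    exact ⟨hyZ, by lia⟩

/-- The function `d` behaves on `Z` like the distance from the root `r` in the subgraph of `G`
induced on `Z`. -/
structure IsDepthFunction (G : SimpleGraph V) (Z : Set V) (r : V) (d : V → ℕ) : Prop where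
  le_succ : ∀ x ∈ Z, ∀ y ∈ Z, G.Adj x y → d x ≤ d y + 1
  exists_adj : ∀ x ∈ Z, ∀ k, d x = k + 1 → ∃ y ∈ Z, G.Adj y x ∧ d y = k
  eq_root : ∀ x ∈ Z, d x = 0 → x = r

theorem exists_isDepthFunction (hZ : PreconnectedOn G Z) (hr : r ∈ Z) :
    ∃ d, IsDepthFunction G Z r d := by
  let root : Z := ⟨r, hr⟩
  have hreach (x : Z) : (G.induce Z).Reachable root x := (hZ r hr x x.2).reachable
  let d : V → ℕ := Function.extend Subtype.val ((G.induce Z).dist root) 0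
  have hd (x : V) (hx : x ∈ Z) : d x = (G.induce Z).dist root ⟨x, hx⟩ :=
    Subtype.val_injective.extend_apply _ _ (⟨x, hx⟩ : Z)
  have hle : ∀ x ∈ Z, ∀ y ∈ Z, G.Adj x y → d x ≤ d y + 1 := by
    intro x hx y hy hxy
    obtain ⟨p, hp⟩ := (hreach ⟨y, hy⟩).exists_walk_length_eq_dist
    have hyx : (G.induce Z).Adj ⟨y, hy⟩ ⟨x, hx⟩ := hxy.symm
    rw [hd x hx, hd y hy, ← hp, ← Walk.length_concat p hyx]
    exact dist_le _
  refine ⟨d, hle, fun x hx k hk => ?_, fun x hx h0 => ?_⟩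
  · obtain ⟨p, hp⟩ := (hreach ⟨x, hx⟩).exists_walk_length_eq_dist
    rw [← hd x hx, hk] at hp
    have hnil : ¬ p.Nil := Walk.not_nil_iff_lt_length.2 (by lia)
    have hadj : G.Adj p.penultimate x := p.adj_penultimate hnil
    have hlen := Walk.length_dropLast_add_one hnil
    have hdist := dist_le p.dropLast
    rw [← hd _ p.penultimate.2] at hdist
    have hsucc := hle x hx _ p.penultimate.2 hadj.symm
    exact ⟨p.penultimate, p.penultimate.2, hadj, by lia⟩
  · rw [hd x hx, (hreach _).dist_eq_zero_iff] at h0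
    exact (congrArg Subtype.val h0).symm

namespace IsDepthFunction

theorem anticomplete (h : IsDepthFunction G Z r d) (hS : S ⊆ Z) (hT : T ⊆ Z)
    (hd : ∀ x ∈ S, ∀ y ∈ T, d y + 1 < d x) : Anticomplete G S T := by
  intro x hx y hy
  have hlt := hd x hx y hy
  exact ⟨fun hxy => by lia, fun hxy => hlt.not_ge (h.le_succ x (hS hx) y (hT hy) hxy)⟩

theorem joined_root (h : IsDepthFunction G Z r d) (hx : x ∈ Z) (hxj : d x ≤ j) :
    Joined G ({x} ∪ {z ∈ Z | d z < j}) x r := by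
  induction hk : d x generalizing x with
  | zero =>
    obtain rfl := h.eq_root x hx hk
    exact .refl (by simp)
  | succ k ih =>
    obtain ⟨y, hy, hyx, hyk⟩ := h.exists_adj x hx k hk
    refine ((ih hy (by lia) hyk).mono ?_).head (by simp) hyx.symm
    exact Set.union_subset (Set.singleton_subset_iff.2 (.inr ⟨hy, by lia⟩)) Set.subset_union_right

theorem layerSystem (h : IsDepthFunction G Z r d) (hC : PreconnectedOn G C)
    (hCZ : C ⊆ {x ∈ Z | d x = j + 2}) :
    LayerSystem G {x ∈ Z | d x < j} {x ∈ Z | d x = j} {x ∈ Z | d x = j + 1 ∧ ∃ c ∈ C, G.Adj x c}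
      C where
  anticomplete_mid := by
    refine h.anticomplete (Set.sep_subset _ _) (Set.sep_subset _ _) ?_
    rintro x ⟨-, hx, -⟩ y ⟨-, hy⟩
    lia
  anticomplete_last := by
    refine h.anticomplete (hCZ.trans (Set.sep_subset _ _))
      (Set.union_subset (Set.sep_subset _ _) (Set.sep_subset _ _)) fun x hx y hy => ?_
    have hxd := (hCZ hx).2
    rcases hy with ⟨-, hy⟩ | ⟨-, hy⟩ <;> lia
  preconnectedOn := hC
  joined := by
    have hroot : ∀ x ∈ {x ∈ Z | d x = j} ∪ {x ∈ Z | d x < j},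
        Joined G ({x} ∪ {z ∈ Z | d z < j}) x r := by
      rintro x (⟨hx, hxj⟩ | ⟨hx, hxj⟩)
      exacts [h.joined_root hx hxj.le, h.joined_root hx hxj.le]
    intro x hx y hy
    refine ((hroot x hx).mono ?_).trans ((hroot y hy).mono ?_).symm <;> gcongr <;> simp
  exists_parent c hc := by
    obtain ⟨hcZ, hcd⟩ := hCZ hc
    obtain ⟨a, ha, hac, had⟩ := h.exists_adj c hcZ (j + 1) hcd
    exact ⟨a, ⟨ha, had, c, hc, hac⟩, hac⟩
  exists_child a ha := ha.2.2
  exists_grandparent := by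
    rintro a ⟨ha, had, -⟩
    obtain ⟨p, hp, hpa, hpd⟩ := h.exists_adj a ha j had
    exact ⟨p, ⟨hp, hpd⟩, hpa⟩

theorem colorable_level [Finite V] (h : IsDepthFunction G Z r d) (hG : ¬ HasOddHole G)
    (hw : G.CliqueFreeOn Z (w + 3))
    (hn : ∀ Z, G.CliqueFreeOn Z (w + 2) → (G.induce Z).Colorable n) (k : ℕ) :
    (G.induce {x ∈ Z | d x = k}).Colorable
      (2 * ((w + 2) * (((w + 2) * n) * ((w + 2) * n)))) := by
  have hle : n ≤ 2 * ((w + 2) * (((w + 2) * n) * ((w + 2) * n))) :=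
    calc n ≤ n * n * (2 * (w + 2) ^ 3) :=
          (Nat.le_mul_self n).trans (Nat.le_mul_of_pos_right _ (by positivity))
      _ = _ := by ring
  match k with
  | 0 =>
    refine (hn _ (CliqueFreeOn.subset _ (s₂ := {r}) ?_ (by simp))).mono hle
    exact fun x hx => h.eq_root x hx.1 hx.2
  | 1 =>
    refine (hn _ fun t ht htc => ?_).mono hle
    have hroot : ∀ x ∈ {x ∈ Z | d x = 1}, r ∈ Z ∧ G.Adj r x := by
      rintro x ⟨hx, hxd⟩
      obtain ⟨y, hy, hyx, hyd⟩ := h.exists_adj x hx 0 hxd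
      exact h.eq_root y hy hyd ▸ ⟨hy, hyx⟩
    obtain ⟨x, hx⟩ : t.Nonempty := Finset.card_pos.1 (by simp [htc.card_eq])
    refine CliqueFreeOn.of_succ _ hw (hroot x (ht hx)).1 (fun y hy => ?_) htc
    exact ⟨(ht hy).1, (hroot y (ht hy)).2⟩
  | j + 2 =>
    refine colorable_induce_of_joined fun x _ => ?_
    set C := {y | Joined G {x ∈ Z | d x = j + 2} x y}
    have hCZ : C ⊆ {x ∈ Z | d x = j + 2} := fun y hy => hy.right_mem
    refine (h.layerSystem (Joined.preconnectedOn G _ x) hCZ).colorable hG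
      (CliqueFreeOn.subset _ ?_ hw) hn
    exact Set.union_subset (Set.union_subset (Set.sep_subset _ _) (Set.sep_subset _ _))
      (hCZ.trans (Set.sep_subset _ _))

end IsDepthFunction

theorem colorable_of_cliqueFreeOn_succ [Finite V] (hG : ¬ HasOddHole G)
    (hw : G.CliqueFreeOn Z (w + 3))
    (hn : ∀ Z, G.CliqueFreeOn Z (w + 2) → (G.induce Z).Colorable n) :
    (G.induce Z).Colorable (2 * (2 * ((w + 2) * (((w + 2) * n) * ((w + 2) * n))))) := by
  refine colorable_induce_of_joined fun x hx => ?_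
  set W := {y | Joined G Z x y}
  have hWZ : W ⊆ Z := fun y hy => hy.right_mem
  obtain ⟨d, hd⟩ := exists_isDepthFunction (Joined.preconnectedOn G Z x) (Joined.refl hx)
  exact colorable_induce_of_levels hd.le_succ
    (hd.colorable_level hG (CliqueFreeOn.subset _ hWZ hw) hn)

end Levels

section Bound

variable {G : SimpleGraph V} {Z : Set V}

/-- The bound on the chromatic number of a graph without odd holes and without cliques of size
`w + 2` that the induction on `w` gives. -/
def colorBound : ℕ → ℕ
  | 0 => 1
  | w + 1 => 4 * (w + 2) ^ 3 * colorBound w ^ 2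

theorem add_two_pow_three_le (w : ℕ) : (w + 2) ^ 3 ≤ 4 ^ (w + 2) := by
  induction w with
  | zero => norm_num
  | succ w ih =>
    rw [pow_succ 4]
    nlinarith [Nat.zero_le w, sq_nonneg w]

theorem colorBound_mul_four_pow_le (w : ℕ) : colorBound w * 4 ^ (w + 4) ≤ 2 ^ 2 ^ (w + 3) := by
  induction w with
  | zero => norm_num [colorBound]
  | succ w ih =>
    calc colorBound (w + 1) * 4 ^ (w + 5)
        = (w + 2) ^ 3 * (4 ^ (w + 6) * colorBound w ^ 2) := by rw [colorBound]; ring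
      _ ≤ 4 ^ (w + 2) * (4 ^ (w + 6) * colorBound w ^ 2) :=
        Nat.mul_le_mul_right _ (add_two_pow_three_le w)
      _ = (colorBound w * 4 ^ (w + 4)) ^ 2 := by ring
      _ ≤ (2 ^ 2 ^ (w + 3)) ^ 2 := Nat.pow_le_pow_left ih 2
      _ = 2 ^ 2 ^ (w + 4) := by rw [← pow_mul, ← pow_succ]

theorem colorable_colorBound [Finite V] (hG : ¬ HasOddHole G) (w : ℕ)
    (hZ : G.CliqueFreeOn Z (w + 2)) : (G.induce Z).Colorable (colorBound w) := by
  induction w generalizing Z with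
  | zero =>
    have hpair := (cliqueFreeOn_two _).1 hZ
    refine ⟨Coloring.mk (fun _ => (0 : Fin 1)) fun {x y} hxy _ => ?_⟩
    exact hpair x.2 y.2 (Subtype.coe_injective.ne hxy.ne) hxy
  | succ w ih =>
    convert colorable_of_cliqueFreeOn_succ hG hZ fun Z hZ => ih hZ using 1
    rw [colorBound]
    ring

theorem colorBound_le (w : ℕ) : colorBound w ≤ 2 ^ 2 ^ (w + 3) :=
  (Nat.le_mul_of_pos_right _ (by positivity)).trans (colorBound_mul_four_pow_le w)

end Bound

end OddHole

theorem stmt9 [Fintype V] (G : SimpleGraph V) (h : ¬ HasOddHole G) :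
    G.chromaticNumber ≤ ((2 ^ 2 ^ (G.cliqueNum + 2) : ℕ) : ℕ∞) := by
  have hfree {w : ℕ} (hw : G.cliqueNum < w) : G.CliqueFreeOn Set.univ w := fun t _ ht =>
    (ht.card_eq ▸ ht.isClique.card_le_cliqueNum).not_gt hw
  have hcol {w : ℕ} (hw : G.cliqueNum ≤ w + 1) : G.Colorable (OddHole.colorBound w) :=
    (OddHole.colorable_colorBound h w (hfree (by lia))).of_hom (induceUnivIso G).symm.toHom
  refine Colorable.chromaticNumber_le ?_
  rcases hω : G.cliqueNum with _ | w
  · exact (hcol (w := 0) (by lia)).mono Nat.one_le_two_pow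
  · exact (hcol hω.le).mono (OddHole.colorBound_le w)
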